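/- Let n = 21, and consider the weight vectors ω_1 = (3,3,1,1) and ω_2 = (3,3,3), both of degree 21. Then the subspaces of GL_4(F_2)-invariants of the weight subquotients (Q_{21})^{ω_1} and (Q_{21})^{ω_2} are both trivial. -/

import Mathlib

/-!
Common setup: the polynomial algebra `P_4 = F_2[x_1,x_2,x_3,x_4]` (variables `X 0, ..., X 3`),
the Steenrod action, hit polynomials, the cohit spaces `Q_n`, and the (induced) actions of
`GL_4(F_2)` and of the symmetric group `Σ_4` on `Q_n`.
-/

open MvPolynomial

noncomputable section

abbrev kk : Type := ZMod 2
abbrev P4 : Type := MvPolynomial (Fin 4) kk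

/-- The total Steenrod square: the algebra endomorphism of `P4` with `X i ↦ X i + (X i)^2`.
For `g` homogeneous of degree `d`, `Sq^t g` is the degree-`d+t` homogeneous component
of `sqTotal g`. -/
def sqTotal : P4 →ₐ[kk] P4 := aeval fun i => X i + X i ^ 2

/-- The homogeneous polynomials of degree `n`, i.e. `(P_4)_n`, as a submodule. -/
def homog (n : ℕ) : Submodule kk P4 := homogeneousSubmodule (Fin 4) kk n

/-- The subspace `H_n` of hit polynomials of degree `n`: it is spanned by the elements
`Sq^{n-d}(g) = (sqTotal g)_n` for `g` homogeneous of degree `d < n`, i.e. by all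
`∑_{t>0} Sq^t(f_t)` with `f_t ∈ (P_4)_{n-t}`. -/
def hitSub (n : ℕ) : Submodule kk P4 :=
  Submodule.span kk
    {p | ∃ d, d < n ∧ ∃ g ∈ homog d, p = homogeneousComponent n (sqTotal g)}

/-- The cohit space `Q_n = (P_4)_n / H_n`. -/
abbrev Qn (n : ℕ) :=
  ↥(homog n) ⧸ ((hitSub n).comap (homog n).subtype)

/-- Projection of a polynomial onto its degree-`n` part, landing in `homog n`. -/
def toHomog (n : ℕ) : P4 →ₗ[kk] homog n :=
  (homogeneousComponent n).codRestrict (homog n) fun f => homogeneousComponent_mem n f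

/-- The class in `Q_n` of (the degree-`n` component of) a polynomial.  For `f`
homogeneous of degree `n` this is the class `[f]` of `f`. -/
def Qmk (n : ℕ) : P4 →ₗ[kk] Qn n :=
  ((hitSub n).comap (homog n).subtype).mkQ.comp (toHomog n)

/-- Substitution action of a matrix `M`: the algebra endomorphism `X i ↦ ∑ j M i j • X j`. -/
def substM (M : Matrix (Fin 4) (Fin 4) kk) : P4 →ₐ[kk] P4 :=
  aeval fun i => ∑ j, M i j • X j

/-- The set of invertible `4 × 4` matrices over `F_2`, i.e. `GL_4(F_2)`. -/
def glSet : Set (Matrix (Fin 4) (Fin 4) kk) := {M | IsUnit M}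

/-- The set of permutation matrices, i.e. `Σ_4 ⊆ GL_4(F_2)`. -/
def permSet : Set (Matrix (Fin 4) (Fin 4) kk) :=
  {M | ∃ σ : Equiv.Perm (Fin 4), M = σ.toPEquiv.toMatrix}

/-- Homogeneous polynomials of degree `n` whose class in `Q_n` is invariant under every
element of `G` (the action on classes being induced by `substM`): for every `M ∈ G`,
`M·f - f` is hit. -/
def invPre (n : ℕ) (G : Set (Matrix (Fin 4) (Fin 4) kk)) : Submodule kk P4 :=
  homog n ⊓ ⨅ M ∈ G, (hitSub n).comap ((substM M).toLinearMap - LinearMap.id)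

/-- The subspace `(Q_n)^G` of `G`-invariant classes in `Q_n`. -/
def QInv (n : ℕ) (G : Set (Matrix (Fin 4) (Fin 4) kk)) : Submodule kk (Qn n) :=
  (invPre n G).map (Qmk n)

/-- The `Σ_4`-submodule of `Q_n` generated by the classes of the polynomials in `S`:
the span of the classes of all the permuted polynomials `σ · f`, `σ ∈ Σ_4`, `f ∈ S`. -/
def permSpan (n : ℕ) (S : Set P4) : Submodule kk (Qn n) :=
  Submodule.span kk
    {c | ∃ σ : Equiv.Perm (Fin 4), ∃ f ∈ S, c = Qmk n (rename (⇑σ) f)}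

/-- The weight vector of an exponent vector `d`: `wv d j = ∑ i (j-th binary digit of d i)`
(indexed from `j = 0`, so `wv d (j-1)` is `ω_j(x^d)` in the literature). -/
def wv (d : Fin 4 →₀ ℕ) (j : ℕ) : ℕ := ∑ i, d i / 2 ^ j % 2

/-- Strict left-lexicographic order on weight vectors. -/
def wLt (a b : ℕ → ℕ) : Prop := ∃ j, (∀ i, i < j → a i = b i) ∧ a j < b j

/-- Left-lexicographic order on weight vectors. -/
def wLe (a b : ℕ → ℕ) : Prop := a = b ∨ wLt a b

/-- `(P_4)_n^{ω}`: the span of the degree-`n` monomials of weight `≤ ω`. -/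
def Pw (n : ℕ) (w : ℕ → ℕ) : Submodule kk P4 :=
  Submodule.span kk
    {f | ∃ d : Fin 4 →₀ ℕ, (∑ i, d i) = n ∧ wLe (wv d) w ∧ f = monomial d 1}

/-- `(P_4)_n^{<ω}`: the span of the degree-`n` monomials of weight `< ω`. -/
def PwLt (n : ℕ) (w : ℕ → ℕ) : Submodule kk P4 :=
  Submodule.span kk
    {f | ∃ d : Fin 4 →₀ ℕ, (∑ i, d i) = n ∧ wLt (wv d) w ∧ f = monomial d 1}

/-- The denominator `(H_n ∩ (P_4)_n^{ω}) + (P_4)_n^{<ω}` of the weight subquotient. -/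
def wDenom (n : ℕ) (w : ℕ → ℕ) : Submodule kk P4 :=
  (hitSub n ⊓ Pw n w) ⊔ PwLt n w

/-- The weight subquotient `(Q_n)^{ω} = (P_4)_n^{ω} / ((H_n ∩ (P_4)_n^{ω}) + (P_4)_n^{<ω})`. -/
abbrev Qw (n : ℕ) (w : ℕ → ℕ) :=
  ↥(Pw n w) ⧸ ((wDenom n w).comap (Pw n w).subtype)

/-- The class `[f]_ω` in `(Q_n)^ω` of an element of `(P_4)_n^{ω}`. -/
def QwMk (n : ℕ) (w : ℕ → ℕ) : Pw n w →ₗ[kk] Qw n w :=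
  ((wDenom n w).comap (Pw n w).subtype).mkQ

/-- The subspace of `G`-invariant classes of `(Q_n)^{ω}` (the action being induced by
`substM`): the image of the subspace of those `f ∈ (P_4)_n^{ω}` with `M·f ≡_ω f`
for all `M ∈ G`. -/
def QwInv (n : ℕ) (w : ℕ → ℕ) (G : Set (Matrix (Fin 4) (Fin 4) kk)) :
    Submodule kk (Qw n w) :=
  Submodule.map (QwMk n w)
    (Submodule.comap (Pw n w).subtype
      (⨅ M ∈ G, (wDenom n w).comap ((substM M).toLinearMap - LinearMap.id)))

/-- The image in `(Q_n)^{ω}` of the span of a set `S ⊆ (P_4)_n^{ω}` of polynomials. -/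
def QwSpanOf (n : ℕ) (w : ℕ → ℕ) (S : Set P4) : Submodule kk (Qw n w) :=
  Submodule.map (QwMk n w) (Submodule.comap (Pw n w).subtype (Submodule.span kk S))

/-!
Write `e_i = ∏_{j ≠ i} x_j`. Modulo polynomials of lower weight, a weight subquotient is spanned by
words: the `e_i e_j² e_k⁴` for the weight `(3,3,3)` and the `e_a e_i² x_k⁴ x_l⁸` for the weight
`(3,3,1,1)`. Modulo hit polynomials as well, the class of a word depends only on its supports,
namely `{i, j, k}`, resp. `({a, i}, {k, l})`.

The coefficient of a spike vanishes on hit polynomials and on polynomials of lower weight. So for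
every `M` in `GL_4`, the coefficient of the spike `(7,7,7,0)`, resp. `(15,3,3,0)`, in `M • f` is a
linear functional on the subquotient. Its value on a word is `[{i, j, k} ⊆ U]`, resp.
`[{a, i} ⊆ U] [{k, l} ⊆ W]`, where `U` is the support of the last row of the adjugate of `M` and `W`
the support of the first column of `M`. On an invariant class all these functionals take the same
value, and summing over the possible `U` shows that this value is `0`.

For `(3,3,3)` the functionals separate the classes, by triangularity with respect to inclusion. For
`(3,3,1,1)` they do so only up to the span of the classes `d_a = e_a (∑ e_i x_i⁶)²`. A transvection
`x_p ↦ x_p + x_q` acts on the `d_a` by `d_q ↦ d_q + d_p`, so that this span has no nonzero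
invariant.
-/

/-! ### Monomials and weights -/

/-- The exponent vector of the squarefree monomial `∏ i ∈ S, X i`. -/
def indicatorExp (S : Finset (Fin 4)) : Fin 4 →₀ ℕ := Finsupp.indicator S fun _ _ => 1

@[simp]
theorem indicatorExp_apply (S : Finset (Fin 4)) (i : Fin 4) :
    indicatorExp S i = if i ∈ S then 1 else 0 := by
  simp [indicatorExp, Finsupp.indicator_apply]

/-- The squarefree monomial with support `S`. -/
def prodX (S : Finset (Fin 4)) : P4 := ∏ i ∈ S, X i

theorem prodX_eq_monomial (S : Finset (Fin 4)) : prodX S = monomial (indicatorExp S) 1 := by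
  simpa [prodX, indicatorExp] using prod_X_pow (R := kk) (fun _ => 1) S

theorem monomial_add_two_smul (b c : Fin 4 →₀ ℕ) :
    (monomial (b + 2 • c) 1 : P4) = monomial b 1 * monomial c 1 ^ 2 := by
  simp [monomial_pow, monomial_mul]

theorem exists_eq_indicatorExp_add (d : Fin 4 →₀ ℕ) : ∃ S c, d = indicatorExp S + 2 • c := by
  refine ⟨Finset.univ.filter fun i => d i % 2 = 1,
    Finsupp.equivFunOnFinite.symm fun i => d i / 2, ?_⟩
  ext i
  simp only [Finsupp.add_apply, indicatorExp_apply, Finset.mem_filter_univ, Finsupp.smul_apply,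
    Finsupp.equivFunOnFinite_symm_apply_apply, smul_eq_mul]
  split_ifs <;> lia

theorem sum_indicatorExp (S : Finset (Fin 4)) : ∑ i, indicatorExp S i = S.card := by
  simp

theorem sum_add_two_smul (b c : Fin 4 →₀ ℕ) :
    ∑ i, (b + 2 • c) i = ∑ i, b i + 2 * ∑ i, c i := by
  simp [Finset.sum_add_distrib, Finset.mul_sum]

theorem sum_apply_eq_zero_iff (c : Fin 4 →₀ ℕ) : ∑ i, c i = 0 ↔ c = 0 := by
  rw [← Finsupp.degree_eq_sum, Finsupp.degree_eq_zero_iff]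

/-- The weight vector `(k, w 0, w 1, …)`. -/
def consWeight (k : ℕ) (w : ℕ → ℕ) : ℕ → ℕ
  | 0 => k
  | j + 1 => w j

theorem wv_indicatorExp_add (S : Finset (Fin 4)) (c : Fin 4 →₀ ℕ) :
    wv (indicatorExp S + 2 • c) = consWeight S.card (wv c) := by
  have hlow (i : Fin 4) : (indicatorExp S + 2 • c) i % 2 = indicatorExp S i := by
    simp only [Finsupp.add_apply, indicatorExp_apply, Finsupp.smul_apply, smul_eq_mul]
    split_ifs <;> lia
  have hhigh (i : Fin 4) : (indicatorExp S + 2 • c) i / 2 = c i := by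
    simp only [Finsupp.add_apply, indicatorExp_apply, Finsupp.smul_apply, smul_eq_mul]
    split_ifs <;> lia
  funext j
  cases j with
  | zero => simp only [wv, pow_zero, Nat.div_one, hlow, sum_indicatorExp, consWeight]
  | succ j => simp only [wv, pow_succ', ← Nat.div_div_eq_div_mul, hhigh, consWeight]

theorem wLt_irrefl (w : ℕ → ℕ) : ¬ wLt w w := fun ⟨_, _, h⟩ => h.false

theorem wLt_of_wLe_of_wLt {u v w : ℕ → ℕ} : wLe u v → wLt v w → wLt u w := by
  rintro (rfl | ⟨i, hi, hlt⟩) ⟨j, hj, hlt'⟩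
  · exact ⟨j, hj, hlt'⟩
  · refine ⟨min i j, fun a ha => ?_, ?_⟩
    · rw [hi a (by lia), hj a (by lia)]
    · obtain h | h | h := lt_trichotomy i j
      · rw [min_eq_left h.le, ← hj i h]
        exact hlt
      · subst h
        rw [min_self]
        exact hlt.trans hlt'
      · rw [min_eq_right h.le, hi j h]
        exact hlt'

theorem wLt_consWeight_of_lt {k l : ℕ} (h : k < l) (v w : ℕ → ℕ) :
    wLt (consWeight k v) (consWeight l w) := ⟨0, by simp, h⟩

theorem wLt_consWeight {v w : ℕ → ℕ} (k : ℕ) : wLt v w → wLt (consWeight k v) (consWeight k w) := by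
  rintro ⟨j, hj, hlt⟩
  refine ⟨j + 1, fun i hi => ?_, hlt⟩
  cases i with
  | zero => rfl
  | succ i => exact hj i (by lia)

theorem wLe_consWeight {v w : ℕ → ℕ} (k : ℕ) : wLe v w → wLe (consWeight k v) (consWeight k w) := by
  rintro (rfl | h)
  exacts [Or.inl rfl, Or.inr (wLt_consWeight k h)]

theorem PwLt_le_Pw (n : ℕ) (w : ℕ → ℕ) : PwLt n w ≤ Pw n w :=
  Submodule.span_mono fun _ ⟨d, hd, hw, h⟩ => ⟨d, hd, Or.inr hw, h⟩

theorem Pw_le_PwLt {n : ℕ} {v w : ℕ → ℕ} (h : wLt v w) : Pw n v ≤ PwLt n w :=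
  Submodule.span_mono fun _ ⟨d, hd, hw, h'⟩ => ⟨d, hd, wLt_of_wLe_of_wLt hw h, h'⟩

theorem monomial_mem_Pw (d : Fin 4 →₀ ℕ) : monomial d 1 ∈ Pw (∑ i, d i) (wv d) :=
  Submodule.subset_span ⟨d, rfl, Or.inl rfl, rfl⟩

theorem homog_eq_span (n : ℕ) :
    homog n = Submodule.span kk {f | ∃ d : Fin 4 →₀ ℕ, ∑ i, d i = n ∧ f = monomial d 1} := by
  refine le_antisymm (fun f hf => ?_) (Submodule.span_le.2 ?_)
  · rw [f.as_sum]
    refine Submodule.sum_mem _ fun d hd => ?_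
    rw [← mul_one (coeff d f), ← smul_eq_mul, ← smul_monomial]
    refine Submodule.smul_mem _ _ (Submodule.subset_span ⟨d, ?_, rfl⟩)
    by_contra hne
    rw [← Finsupp.degree_eq_sum] at hne
    exact mem_support_iff.1 hd (IsHomogeneous.coeff_eq_zero hf hne)
  · rintro _ ⟨d, rfl, rfl⟩
    exact isHomogeneous_monomial _ (Finsupp.degree_eq_sum d)

theorem prodX_mem_homog (S : Finset (Fin 4)) : prodX S ∈ homog S.card := by
  rw [homog_eq_span, prodX_eq_monomial]
  exact Submodule.subset_span ⟨_, sum_indicatorExp S, rfl⟩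

theorem X_mem_homog (i : Fin 4) : X i ∈ homog 1 := isHomogeneous_X _ _

theorem mul_mem_homog {m n : ℕ} {A B : P4} (hA : A ∈ homog m) (hB : B ∈ homog n) :
    A * B ∈ homog (m + n) := IsHomogeneous.mul hA hB

theorem pow_mem_homog {m : ℕ} {A : P4} (hA : A ∈ homog m) (n : ℕ) : A ^ n ∈ homog (m * n) :=
  IsHomogeneous.pow hA n

theorem mul_sq_mem_homog {m n : ℕ} {A B : P4} (hA : A ∈ homog m) (hB : B ∈ homog n) :
    A * B ^ 2 ∈ homog (m + 2 * n) := by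
  rw [mul_comm 2]
  exact mul_mem_homog hA (pow_mem_homog hB 2)

/-- Squaring is additive in characteristic two, and `c ^ 2 = c` for scalars, so `A * B ^ 2` is a
bilinear function of `A` and `B`. -/
def mulSq : P4 →ₗ[kk] P4 →ₗ[kk] P4 :=
  LinearMap.mk₂ kk (fun A B => A * B ^ 2) (fun _ _ _ => add_mul _ _ _)
    (fun _ _ _ => smul_mul_assoc _ _ _) (fun _ _ _ => by rw [CharTwo.add_sq, mul_add])
    (fun c _ _ => by rw [smul_pow, ZMod.pow_card, mul_smul_comm])

theorem mul_sq_mem_of_mem_span {s t : Set P4} {N : Submodule kk P4}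
    (h : ∀ a ∈ s, ∀ b ∈ t, a * b ^ 2 ∈ N) {A B : P4} (hA : A ∈ Submodule.span kk s)
    (hB : B ∈ Submodule.span kk t) : A * B ^ 2 ∈ N := by
  have hle : Submodule.map₂ mulSq (Submodule.span kk s) (Submodule.span kk t) ≤ N := by
    rw [Submodule.map₂_span_span, Submodule.span_le]
    rintro _ ⟨a, ha, b, hb, rfl⟩
    exact h a ha b hb
  exact hle (Submodule.apply_mem_map₂ mulSq hA hB)

theorem mul_sq_mem_Pw {k m : ℕ} {w : ℕ → ℕ} {A B : P4} (hA : A ∈ homog k) (hB : B ∈ Pw m w) :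
    A * B ^ 2 ∈ Pw (k + 2 * m) (consWeight k w) := by
  rw [homog_eq_span] at hA
  refine mul_sq_mem_of_mem_span ?_ hA hB
  rintro _ ⟨d, rfl, rfl⟩ _ ⟨c, rfl, hw, rfl⟩
  rw [← monomial_add_two_smul]
  refine Submodule.subset_span ⟨_, sum_add_two_smul d c, ?_, rfl⟩
  obtain ⟨S, b, rfl⟩ := exists_eq_indicatorExp_add d
  rw [add_assoc, ← smul_add, wv_indicatorExp_add, sum_add_two_smul, sum_indicatorExp]
  obtain hb | hb := (∑ i, b i).eq_zero_or_pos
  · obtain rfl := (sum_apply_eq_zero_iff b).1 hb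
    simpa using wLe_consWeight _ hw
  · exact Or.inr (wLt_consWeight_of_lt (by lia) _ _)

theorem mul_sq_mem_PwLt {k m : ℕ} {w : ℕ → ℕ} {A B : P4} (hA : A ∈ homog k) (hB : B ∈ PwLt m w) :
    A * B ^ 2 ∈ PwLt (k + 2 * m) (consWeight k w) := by
  refine mul_sq_mem_of_mem_span (s := {A}) ?_ (Submodule.mem_span_singleton_self A) hB
  rintro _ rfl _ ⟨c, rfl, hw, rfl⟩
  exact Pw_le_PwLt (wLt_consWeight k hw) (mul_sq_mem_Pw hA (monomial_mem_Pw c))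

theorem mul_sq_mem_PwLt_of_lt {j k m : ℕ} (hjk : j < k) (w : ℕ → ℕ) {A B : P4} (hA : A ∈ homog j)
    (hB : B ∈ homog m) : A * B ^ 2 ∈ PwLt (j + 2 * m) (consWeight k w) := by
  rw [homog_eq_span] at hB
  refine mul_sq_mem_of_mem_span (s := {A}) ?_ (Submodule.mem_span_singleton_self A) hB
  rintro _ rfl _ ⟨c, rfl, rfl⟩
  exact Pw_le_PwLt (wLt_consWeight_of_lt hjk _ _) (mul_sq_mem_Pw hA (monomial_mem_Pw c))

/-! ### The relations of a weight subquotient -/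

/-- The sum `H_n + (P_4)_n^{<ω}`. Its intersection with `(P_4)_n^{ω}` is `wDenom n w`, but unlike
`wDenom` it does not require its members to lie in `(P_4)_n^{ω}`. -/
def hitAddLow (n : ℕ) (w : ℕ → ℕ) : Submodule kk P4 := hitSub n ⊔ PwLt n w

theorem hitSub_le_hitAddLow (n : ℕ) (w : ℕ → ℕ) : hitSub n ≤ hitAddLow n w := le_sup_left

theorem PwLt_le_hitAddLow (n : ℕ) (w : ℕ → ℕ) : PwLt n w ≤ hitAddLow n w := le_sup_right

theorem mem_wDenom {n : ℕ} {w : ℕ → ℕ} {f : P4} :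
    f ∈ wDenom n w ↔ f ∈ Pw n w ∧ f ∈ hitAddLow n w := by
  rw [wDenom, hitAddLow, inf_comm, inf_sup_assoc_of_le _ (PwLt_le_Pw n w), Submodule.mem_inf]

theorem substM_mem_homog (M : Matrix (Fin 4) (Fin 4) kk) {n : ℕ} {f : P4} (hf : f ∈ homog n) :
    substM M f ∈ homog n := by
  rw [← one_mul n]
  exact IsHomogeneous.aeval hf _ fun i =>
    Submodule.sum_mem (homog 1) fun j _ => Submodule.smul_mem _ _ (X_mem_homog j)

theorem substM_sqTotal (M : Matrix (Fin 4) (Fin 4) kk) (g : P4) :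
    substM M (sqTotal g) = sqTotal (substM M g) := by
  suffices (substM M).comp sqTotal = sqTotal.comp (substM M) from DFunLike.congr_fun this g
  ext1 i
  simp only [AlgHom.comp_apply, sqTotal, substM, aeval_X, map_add, map_pow, map_sum, map_smul,
    smul_add, Finset.sum_add_distrib, CharTwo.sum_sq, smul_pow, ZMod.pow_card]

theorem substM_homogeneousComponent (M : Matrix (Fin 4) (Fin 4) kk) (n : ℕ) (g : P4) :
    substM M (homogeneousComponent n g) = homogeneousComponent n (substM M g) := by
  induction g using MvPolynomial.induction_on' with
  | monomial d c =>
    have hd : monomial d c ∈ homog d.degree := isHomogeneous_monomial _ rfl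
    rw [homogeneousComponent_of_mem hd, homogeneousComponent_of_mem (substM_mem_homog M hd)]
    split_ifs <;> simp
  | add p q hp hq => simp only [map_add, hp, hq]

theorem substM_mem_hitSub (M : Matrix (Fin 4) (Fin 4) kk) {n : ℕ} {f : P4} (hf : f ∈ hitSub n) :
    substM M f ∈ hitSub n := by
  suffices hitSub n ≤ (hitSub n).comap (substM M).toLinearMap from this hf
  refine Submodule.span_le.2 ?_
  rintro _ ⟨m, hm, g, hg, rfl⟩
  refine Submodule.subset_span ⟨m, hm, substM M g, substM_mem_homog M hg, ?_⟩
  rw [← substM_sqTotal, ← substM_homogeneousComponent]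
  rfl

theorem substM_monomial_mem_Pw (M : Matrix (Fin 4) (Fin 4) kk) (d : Fin 4 →₀ ℕ) :
    substM M (monomial d 1) ∈ Pw (∑ i, d i) (wv d) := by
  induction hn : ∑ i, d i using Nat.strong_induction_on generalizing d with
  | _ n ih =>
    obtain rfl | hd := eq_or_ne d 0
    · rw [← hn, monomial_zero', C_1, map_one]
      exact monomial_mem_Pw 0
    · have hpos : 0 < ∑ i, d i := Nat.pos_of_ne_zero ((sum_apply_eq_zero_iff d).not.2 hd)
      obtain ⟨S, c, rfl⟩ := exists_eq_indicatorExp_add d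
      rw [sum_add_two_smul, sum_indicatorExp] at hn hpos
      rw [monomial_add_two_smul, map_mul, map_pow, ← prodX_eq_monomial, wv_indicatorExp_add, ← hn]
      exact mul_sq_mem_Pw (substM_mem_homog M (prodX_mem_homog S)) (ih _ (by lia) c rfl)

theorem substM_mem_PwLt (M : Matrix (Fin 4) (Fin 4) kk) {n : ℕ} {w : ℕ → ℕ} {f : P4}
    (hf : f ∈ PwLt n w) : substM M f ∈ PwLt n w := by
  suffices PwLt n w ≤ (PwLt n w).comap (substM M).toLinearMap from this hf
  refine Submodule.span_le.2 ?_
  rintro _ ⟨d, rfl, hw, rfl⟩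
  exact Pw_le_PwLt hw (substM_monomial_mem_Pw M d)

theorem substM_mem_hitAddLow (M : Matrix (Fin 4) (Fin 4) kk) {n : ℕ} {w : ℕ → ℕ} {f : P4}
    (hf : f ∈ hitAddLow n w) : substM M f ∈ hitAddLow n w := by
  obtain ⟨g, hg, h, hh, rfl⟩ := Submodule.mem_sup.1 hf
  rw [map_add]
  exact Submodule.add_mem_sup (substM_mem_hitSub M hg) (substM_mem_PwLt M hh)

/-! ### Steenrod squares -/

theorem sqTotal_monomial (d : Fin 4 →₀ ℕ) :
    sqTotal (monomial d 1) = monomial d 1 * ∏ i, (1 + X i) ^ d i := by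
  have hX (i : Fin 4) : (X i + X i ^ 2 : P4) ^ d i = X i ^ d i * (1 + X i) ^ d i := by
    rw [← mul_pow]
    ring
  rw [sqTotal, aeval_monomial, map_one, one_mul, d.prod_fintype _ fun _ => pow_zero _]
  rw [monomial_eq, C_1, one_mul, d.prod_fintype _ fun _ => pow_zero _]
  simp only [hX, Finset.prod_mul_distrib]

theorem coeff_prod_one_add_X_pow (d e : Fin 4 →₀ ℕ) :
    coeff e (∏ i, (1 + X i) ^ d i : P4) = ∏ i, ((d i).choose (e i) : kk) := by
  have hpow (i : Fin 4) : (1 + X i : P4) ^ d i =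
      ∑ k ∈ Finset.range (d i + 1), monomial (Finsupp.single i k) ((d i).choose k : kk) := by
    rw [add_comm, add_pow]
    refine Finset.sum_congr rfl fun k _ => ?_
    rw [one_pow, mul_one, ← C_eq_coe_nat, X_pow_eq_monomial, mul_comm, C_mul_monomial, mul_one]
  have hterm (p : Fin 4 → ℕ) : (∏ i, monomial (Finsupp.single i (p i)) ((d i).choose (p i) : kk)) =
      monomial (Finsupp.equivFunOnFinite.symm p) (∏ i, ((d i).choose (p i) : kk)) := by
    rw [← monomial_sum_prod, Finsupp.equivFunOnFinite_symm_eq_sum]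
  simp only [hpow, Finset.prod_univ_sum, hterm, coeff_sum, coeff_monomial,
    Equiv.symm_apply_eq (Finsupp.equivFunOnFinite), Finset.sum_ite_eq', Fintype.mem_piFinset,
    Finset.mem_range]
  split_ifs with h
  · rfl
  · simp only [not_forall, Nat.not_lt] at h
    obtain ⟨i, hi⟩ := h
    refine (Finset.prod_eq_zero (Finset.mem_univ i) ?_).symm
    rw [Nat.choose_eq_zero_of_lt (by simpa using hi), Nat.cast_zero]

theorem even_choose_of_add_eq {d k s : ℕ} (h : d + k + 1 = 2 ^ s) (hk : 0 < k) :
    Even (d.choose k) := by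
  induction s generalizing d k with
  | zero => lia
  | succ s ih =>
    have hmod := Choose.choose_modEq_choose_mod_mul_choose_div_nat (n := d) (k := k) (p := 2)
    rw [Nat.even_iff, hmod]
    rw [pow_succ] at h
    obtain hd | hd := Nat.mod_two_eq_zero_or_one d
    · simp [hd, show k % 2 = 1 by lia]
    · rw [← Nat.even_iff]
      exact (ih (by lia) (by lia)).mul_left _

theorem homogeneousComponent_mul {m : ℕ} {A : P4} (hA : A ∈ homog m) (n : ℕ) (B : P4) :
    homogeneousComponent (m + n) (A * B) = A * homogeneousComponent n B := by
  induction B using MvPolynomial.induction_on' with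
  | monomial d c =>
    have hd : monomial d c ∈ homog d.degree := isHomogeneous_monomial _ rfl
    rw [homogeneousComponent_of_mem hd, homogeneousComponent_of_mem (mul_mem_homog hA hd)]
    simp only [Nat.add_left_cancel_iff, mul_ite, mul_zero]
  | add p q hp hq => simp only [mul_add, map_add, hp, hq]

theorem homogeneousComponent_mul_sq {m : ℕ} {A : P4} (hA : A ∈ homog m) (n : ℕ) (B : P4) :
    homogeneousComponent (m + 2 * n) (A * B ^ 2) = A * homogeneousComponent n B ^ 2 := by
  induction B using MvPolynomial.induction_on' with
  | monomial d c =>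
    have hd : monomial d c ∈ homog d.degree := isHomogeneous_monomial _ rfl
    rw [homogeneousComponent_of_mem hd, homogeneousComponent_of_mem (mul_sq_mem_homog hA hd)]
    simp only [Nat.add_left_cancel_iff, Nat.mul_left_cancel_iff two_pos]
    split_ifs <;> simp
  | add p q hp hq => simp only [CharTwo.add_sq, mul_add, map_add, hp, hq]

theorem homogeneousComponent_mul_sq_mem_PwLt {j k : ℕ} (hjk : j < k) (n : ℕ) (w : ℕ → ℕ) {A : P4}
    (hA : A ∈ homog j) (B : P4) :
    homogeneousComponent n (A * B ^ 2) ∈ PwLt n (consWeight k w) := by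
  induction B using MvPolynomial.induction_on' with
  | monomial d c =>
    have hd : monomial d c ∈ homog d.degree := isHomogeneous_monomial _ rfl
    rw [homogeneousComponent_of_mem (mul_sq_mem_homog hA hd)]
    split_ifs with hn
    · rw [hn]
      exact mul_sq_mem_PwLt_of_lt hjk w hA hd
    · exact Submodule.zero_mem _
  | add p q hp hq =>
    rw [CharTwo.add_sq, mul_add, map_add]
    exact Submodule.add_mem _ hp hq

theorem sqTotal_prodX_mul_sq (S : Finset (Fin 4)) (g : P4) :
    sqTotal (prodX S * g ^ 2) =
      ∑ A ∈ S.powerset, prodX (S \ A) * (prodX A * sqTotal g) ^ 2 := by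
  have hS : sqTotal (prodX S) = ∑ A ∈ S.powerset, prodX (S \ A) * prodX A ^ 2 := by
    rw [prodX, map_prod]
    simp only [sqTotal, aeval_X, add_comm (X _ : P4)]
    rw [Finset.prod_add]
    refine Finset.sum_congr rfl fun A _ => ?_
    rw [prodX, prodX, Finset.prod_pow, mul_comm]
  rw [map_mul, map_pow, hS, Finset.sum_mul]
  exact Finset.sum_congr rfl fun A _ => by ring

/-- Modulo lower weights, `Sq^{2t}` acts on `prodX S * g ^ 2` as `Sq^t` acts on `g`. -/
theorem prodX_mul_sq_mem_hitAddLow (S : Finset (Fin 4)) {m : ℕ} (w : ℕ → ℕ) {g : P4}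
    (hg : g ∈ hitSub m) :
    prodX S * g ^ 2 ∈ hitAddLow (S.card + 2 * m) (consWeight S.card w) := by
  refine mul_sq_mem_of_mem_span (s := {prodX S}) ?_ (Submodule.mem_span_singleton_self _) hg
  rintro _ rfl _ ⟨d, hd, h, hh, rfl⟩
  have hit : homogeneousComponent (S.card + 2 * m) (sqTotal (prodX S * h ^ 2)) ∈
      hitSub (S.card + 2 * m) :=
    Submodule.subset_span ⟨S.card + 2 * d, by lia, _, mul_sq_mem_homog (prodX_mem_homog S) hh, rfl⟩
  rw [sqTotal_prodX_mul_sq, ← Finset.add_sum_erase _ _ (Finset.empty_mem_powerset S),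
    Finset.sdiff_empty, map_add, map_sum] at hit
  have hempty : prodX ∅ = 1 := Finset.prod_empty
  rw [hempty, one_mul, homogeneousComponent_mul_sq (prodX_mem_homog S)] at hit
  refine (Submodule.add_mem_iff_left _ (PwLt_le_hitAddLow _ _ ?_)).1
    (hitSub_le_hitAddLow _ _ hit)
  refine Submodule.sum_mem _ fun A hA => ?_
  obtain ⟨hne, hsub⟩ := Finset.mem_erase.1 hA
  rw [Finset.mem_powerset] at hsub
  refine homogeneousComponent_mul_sq_mem_PwLt ?_ _ _ (prodX_mem_homog (S \ A)) _
  exact Finset.card_lt_card (Finset.sdiff_ssubset hsub (Finset.nonempty_iff_ne_empty.2 hne))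

theorem hitSub_le_homog (n : ℕ) : hitSub n ≤ homog n := by
  refine Submodule.span_le.2 ?_
  rintro _ ⟨d, -, g, -, rfl⟩
  exact homogeneousComponent_mem n _

theorem PwLt_le_homog (n : ℕ) (w : ℕ → ℕ) : PwLt n w ≤ homog n := by
  rw [homog_eq_span]
  exact Submodule.span_mono fun _ ⟨d, hd, _, h⟩ => ⟨d, hd, h⟩

theorem hitAddLow_le_homog (n : ℕ) (w : ℕ → ℕ) : hitAddLow n w ≤ homog n :=
  sup_le (hitSub_le_homog n) (PwLt_le_homog n w)

theorem mul_sq_mem_hitAddLow {k m : ℕ} {w : ℕ → ℕ} {A B : P4} (hA : A ∈ homog k)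
    (hB : B ∈ hitAddLow m w) : A * B ^ 2 ∈ hitAddLow (k + 2 * m) (consWeight k w) := by
  rw [homog_eq_span] at hA
  refine mul_sq_mem_of_mem_span (t := {B}) ?_ hA (Submodule.mem_span_singleton_self B)
  rintro _ ⟨d, hd, rfl⟩ _ rfl
  obtain ⟨S, c, rfl⟩ := exists_eq_indicatorExp_add d
  rw [monomial_add_two_smul, ← prodX_eq_monomial]
  rw [sum_add_two_smul, sum_indicatorExp] at hd
  subst hd
  obtain hc | hc := (∑ i, c i).eq_zero_or_pos
  · obtain rfl := (sum_apply_eq_zero_iff c).1 hc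
    obtain ⟨p, hp, q, hq, rfl⟩ := Submodule.mem_sup.1 hB
    rw [hc, monomial_zero', C_1, one_pow, mul_one, mul_zero, add_zero, CharTwo.add_sq, mul_add]
    exact Submodule.add_mem _ (prodX_mul_sq_mem_hitAddLow S w hp)
      (PwLt_le_hitAddLow _ _ (mul_sq_mem_PwLt (prodX_mem_homog S) hq))
  · have hcB := mul_mem_homog (isHomogeneous_monomial (R := kk) 1 (Finsupp.degree_eq_sum c))
      (hitAddLow_le_homog _ _ hB)
    rw [mul_assoc, ← mul_pow, add_assoc, ← mul_add]
    exact PwLt_le_hitAddLow _ _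
      (mul_sq_mem_PwLt_of_lt (by lia) w (prodX_mem_homog S) hcB)

theorem homogeneousComponent_one_prod_one_add_X_pow (d : Fin 4 →₀ ℕ) :
    homogeneousComponent 1 (∏ i, (1 + X i) ^ d i : P4) = ∑ i, (d i : kk) • X i := by
  ext e
  rw [coeff_homogeneousComponent, coeff_prod_one_add_X_pow, coeff_sum]
  simp only [coeff_smul, coeff_X, smul_eq_mul, mul_ite, mul_one, mul_zero]
  split_ifs with he
  · obtain ⟨j, rfl⟩ : e ∈ Set.range fun j => Finsupp.single j 1 := by
      rwa [Finsupp.range_single_one]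
    simp only [Finsupp.single_left_inj one_ne_zero, Finset.sum_ite_eq', Finset.mem_univ, if_true]
    rw [Finset.prod_eq_single j (fun i _ hi => by simp [hi]) (by simp), Finsupp.single_eq_same,
      Nat.choose_one_right]
  · refine (Finset.sum_eq_zero fun i _ => if_neg ?_).symm
    rintro rfl
    exact he (Finsupp.degree_single i 1)

theorem prodX_mul_sq_mul_sum_X_mem_hitSub (S : Finset (Fin 4)) {m : ℕ} {g : P4}
    (hg : g ∈ homog m) : prodX S * g ^ 2 * ∑ i ∈ S, X i ∈ hitSub (S.card + 2 * m + 1) := by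
  suffices prodX S * g ^ 2 ∈ (hitSub (S.card + 2 * m + 1)).comap
    (LinearMap.mulRight kk (∑ i ∈ S, X i)) from this
  rw [homog_eq_span] at hg
  refine mul_sq_mem_of_mem_span (s := {prodX S}) ?_ (Submodule.mem_span_singleton_self _) hg
  rintro _ rfl _ ⟨c, rfl, rfl⟩
  have hsum : ∑ i ∈ S, (X i : P4) = ∑ i, ((indicatorExp S + 2 • c) i : kk) • X i := by
    have h2 : (2 : kk) = 0 := CharTwo.two_eq_zero
    simp [h2, ite_smul]
  rw [prodX_eq_monomial, ← monomial_add_two_smul, Submodule.mem_comap, LinearMap.mulRight_apply,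
    hsum, ← homogeneousComponent_one_prod_one_add_X_pow, ← homogeneousComponent_mul
    (isHomogeneous_monomial (R := kk) 1 (Finsupp.degree_eq_sum _)), ← sqTotal_monomial,
    sum_add_two_smul, sum_indicatorExp]
  refine Submodule.subset_span ⟨_, Nat.lt_succ_self _, _, ?_, rfl⟩
  rw [monomial_add_two_smul, ← prodX_eq_monomial]
  exact mul_sq_mem_homog (prodX_mem_homog S)
    (isHomogeneous_monomial (R := kk) 1 (Finsupp.degree_eq_sum c))

/-- An exponent vector all of whose entries are of the form `2 ^ s - 1`: Steenrod squares of
positive degree do not produce it. -/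
def IsSpike (e : Fin 4 →₀ ℕ) : Prop := ∀ i, ∃ s, e i + 1 = 2 ^ s

theorem coeff_eq_zero_of_mem_hitSub {n : ℕ} {e : Fin 4 →₀ ℕ} (he : IsSpike e) {f : P4}
    (hf : f ∈ hitSub n) : coeff e f = 0 := by
  suffices hitSub n ≤ LinearMap.ker (lcoeff kk e) from this hf
  refine Submodule.span_le.2 ?_
  rintro _ ⟨m, hm, g, hg, rfl⟩
  rw [SetLike.mem_coe, LinearMap.mem_ker, lcoeff_apply, coeff_homogeneousComponent]
  split_ifs with hn
  swap
  · rfl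
  suffices homog m ≤ LinearMap.ker (lcoeff kk e ∘ₗ sqTotal.toLinearMap) from this hg
  rw [homog_eq_span, Submodule.span_le]
  rintro _ ⟨d, rfl, rfl⟩
  change coeff e (sqTotal (monomial d 1)) = 0
  rw [sqTotal_monomial, coeff_monomial_mul', one_mul, coeff_prod_one_add_X_pow]
  split_ifs with hde
  swap
  · rfl
  rw [← hn, Finsupp.degree_eq_sum] at hm
  obtain ⟨i, -, hi⟩ := Finset.exists_lt_of_sum_lt hm
  obtain ⟨s, hs⟩ := he i
  refine Finset.prod_eq_zero (Finset.mem_univ i) ?_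
  rw [ZMod.natCast_eq_zero_iff_even, Finsupp.tsub_apply]
  exact even_choose_of_add_eq (s := s) (by lia) (by lia)

theorem coeff_eq_zero_of_mem_PwLt {n : ℕ} {w : ℕ → ℕ} {e : Fin 4 →₀ ℕ} (he : wv e = w) {f : P4}
    (hf : f ∈ PwLt n w) : coeff e f = 0 := by
  suffices PwLt n w ≤ LinearMap.ker (lcoeff kk e) from this hf
  refine Submodule.span_le.2 ?_
  rintro _ ⟨d, -, hd, rfl⟩
  refine (coeff_monomial e d 1).trans (if_neg ?_)
  rintro rfl
  exact wLt_irrefl w (he ▸ hd)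

theorem IsSpike.coeff_eq_zero {n : ℕ} {w : ℕ → ℕ} {e : Fin 4 →₀ ℕ} (he : IsSpike e)
    (hw : wv e = w) {f : P4} (hf : f ∈ hitAddLow n w) : coeff e f = 0 := by
  obtain ⟨g, hg, h, hh, rfl⟩ := Submodule.mem_sup.1 hf
  rw [coeff_add, coeff_eq_zero_of_mem_hitSub he hg, coeff_eq_zero_of_mem_PwLt hw hh, add_zero]

/-! ### Relations between words -/

/-- The cubic monomial `∏ j ≠ i, X j`. -/
def omitX (i : Fin 4) : P4 := prodX {i}ᶜ

theorem omitX_mem_homog (i : Fin 4) : omitX i ∈ homog 3 := by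
  simpa [omitX, Finset.card_compl] using prodX_mem_homog {i}ᶜ

theorem X_mul_prodX_insert {i : Fin 4} {S : Finset (Fin 4)} (hi : i ∉ S) :
    X i * prodX S = prodX (insert i S) := (Finset.prod_insert hi).symm

theorem X_mul_prodX_erase {i : Fin 4} {S : Finset (Fin 4)} (hi : i ∈ S) :
    X i * prodX (S.erase i) = prodX S := Finset.mul_prod_erase S X hi

theorem X_mul_omitX (i : Fin 4) : X i * omitX i = prodX Finset.univ := by
  rw [omitX, X_mul_prodX_insert (by simp), Finset.insert_compl_self]

theorem X_mul_prodX_compl_pair {p q : Fin 4} (hpq : p ≠ q) : X p * prodX {p, q}ᶜ = omitX q := by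
  rw [X_mul_prodX_insert (by simp), omitX]
  congr 1
  ext i
  simp only [Finset.mem_insert, Finset.mem_compl, Finset.mem_singleton]
  grind

theorem X_mul_prodX_univ_mul_sq (i : Fin 4) (g : P4) :
    X i * (prodX Finset.univ * g ^ 2) = omitX i * (X i * g) ^ 2 := by
  rw [← X_mul_omitX i]
  ring

theorem sum_omitX_mul_sq_mem_hitSub {m : ℕ} {g : P4} (hg : g ∈ homog m) :
    ∑ i, omitX i * (X i * g) ^ 2 ∈ hitSub (5 + 2 * m) := by
  have h := prodX_mul_sq_mul_sum_X_mem_hitSub Finset.univ hg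
  rw [mul_comm (_ * _), Finset.sum_mul, Finset.card_univ, Fintype.card_fin, add_right_comm] at h
  simpa only [X_mul_prodX_univ_mul_sq] using h

theorem X_mul_prodX_mul_sq_mem_PwLt {S : Finset (Fin 4)} {i : Fin 4} (hi : i ∈ S)
    (hS : S.card ≤ 3) {m : ℕ} {g : P4} (hg : g ∈ homog m) (w : ℕ → ℕ) :
    X i * (prodX S * g ^ 2) ∈ PwLt (S.card + 1 + 2 * m) (consWeight 3 w) := by
  have h := mul_sq_mem_PwLt_of_lt (k := 3) (by rw [Finset.card_erase_of_mem hi]; lia) w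
    (prodX_mem_homog (S.erase i)) (mul_mem_homog (X_mem_homog i) hg)
  have hcard := Finset.card_erase_add_one hi
  rw [← X_mul_prodX_erase hi]
  convert h using 1
  · rw [show S.card + 1 + 2 * m = (S.erase i).card + 2 * (1 + m) by lia]
  · ring

theorem sum_eq_add_add_sum_compl_pair {A : Type*} [AddCommMonoid A] {p q : Fin 4} (hpq : p ≠ q)
    (f : Fin 4 → A) :
    ∑ i, f i = f p + f q + ∑ i ∈ {p, q}ᶜ, f i := by
  rw [← Finset.sum_add_sum_compl {p, q}, Finset.sum_pair hpq]

theorem card_compl_pair {p q : Fin 4} (hpq : p ≠ q) : ({p, q}ᶜ : Finset (Fin 4)).card = 2 := by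
  rw [Finset.card_compl, Finset.card_pair hpq, Fintype.card_fin]

theorem omitX_mul_omitX_swap {m : ℕ} {g : P4} (hg : g ∈ homog m) (w : ℕ → ℕ) (p q : Fin 4) :
    omitX p * (omitX q * g ^ 2) ^ 2 - omitX q * (omitX p * g ^ 2) ^ 2 ∈
      hitAddLow (9 + 4 * m) (consWeight 3 (consWeight 3 w)) := by
  obtain rfl | hpq := eq_or_ne p q
  · rw [sub_self]
    exact Submodule.zero_mem _
  have hcard := card_compl_pair hpq
  have hy : prodX {p, q}ᶜ * g ^ 2 ∈ homog (2 + 2 * m) := by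
    simpa only [hcard] using mul_sq_mem_homog (prodX_mem_homog {p, q}ᶜ) hg
  have hit := hitSub_le_hitAddLow _ (consWeight 3 (consWeight 3 w))
    (sum_omitX_mul_sq_mem_hitSub hy)
  rw [sum_eq_add_add_sum_compl_pair hpq, ← mul_assoc, X_mul_prodX_compl_pair hpq, ← mul_assoc (X q),
    Finset.pair_comm, X_mul_prodX_compl_pair hpq.symm, Finset.pair_comm] at hit
  rw [CharTwo.sub_eq_add, show 9 + 4 * m = 5 + 2 * (2 + 2 * m) by ring]
  refine (Submodule.add_mem_iff_left _ (Submodule.sum_mem _ fun i hi => ?_)).1 hit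
  refine PwLt_le_hitAddLow _ _ ?_
  have h := mul_sq_mem_PwLt (omitX_mem_homog i)
    (X_mul_prodX_mul_sq_mem_PwLt hi (by lia) hg w)
  rw [hcard] at h
  convert h using 2
  ring

theorem omitX_cube_mul_swap (p q : Fin 4) :
    omitX p * (omitX p * omitX q ^ 2) ^ 2 - omitX q * (omitX q * omitX p ^ 2) ^ 2 ∈
      hitAddLow 21 (consWeight 3 (consWeight 3 (consWeight 3 0))) := by
  obtain rfl | hpq := eq_or_ne p q
  · rw [sub_self]
    exact Submodule.zero_mem _
  have hcard := card_compl_pair hpq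
  have hy : prodX {p, q}ᶜ ∈ homog 2 := by simpa only [hcard] using prodX_mem_homog {p, q}ᶜ
  have hx : prodX Finset.univ ∈ homog 4 := prodX_mem_homog Finset.univ
  have hit := hitSub_le_hitAddLow _ (consWeight 3 (consWeight 3 (consWeight 3 0)))
    (sum_omitX_mul_sq_mem_hitSub (mul_sq_mem_homog hx hy))
  simp only [X_mul_prodX_univ_mul_sq] at hit
  rw [sum_eq_add_add_sum_compl_pair hpq, X_mul_prodX_compl_pair hpq,
    Finset.pair_comm, X_mul_prodX_compl_pair hpq.symm, Finset.pair_comm] at hit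
  rw [CharTwo.sub_eq_add]
  refine (Submodule.add_mem_iff_left _ (Submodule.sum_mem _ fun i hi => ?_)).1 hit
  refine PwLt_le_hitAddLow _ _ ?_
  have h := X_mul_prodX_mul_sq_mem_PwLt hi (by lia) (isHomogeneous_one (Fin 4) kk) 0
  rw [one_pow, mul_one, hcard] at h
  have h' := mul_sq_mem_PwLt (omitX_mem_homog i) (mul_sq_mem_PwLt (omitX_mem_homog i) h)
  simpa only [Nat.reduceMul, Nat.reduceAdd] using h'

theorem X_mul_X_sq_swap (w : ℕ → ℕ) (k l : Fin 4) :
    X k * X l ^ 2 - X l * X k ^ 2 ∈ hitAddLow 3 w := by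
  obtain rfl | hkl := eq_or_ne k l
  · rw [sub_self]
    exact Submodule.zero_mem _
  have hit := prodX_mul_sq_mul_sum_X_mem_hitSub {k, l} (isHomogeneous_one (Fin 4) kk)
  rw [Finset.card_pair hkl, Finset.sum_pair hkl, prodX, Finset.prod_pair hkl] at hit
  refine hitSub_le_hitAddLow _ _ ?_
  rw [CharTwo.sub_eq_add]
  convert hit using 1
  ring

/-! ### Leading coefficients -/

theorem coeff_mul_sq {S : Finset (Fin 4)} {A : P4} (hA : A ∈ homog S.card) (e : Fin 4 →₀ ℕ)
    (B : P4) :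
    coeff (indicatorExp S + 2 • e) (A * B ^ 2) = coeff (indicatorExp S) A * coeff e B := by
  induction B using MvPolynomial.induction_on' with
  | monomial c b =>
    rw [monomial_pow, coeff_mul_monomial', ZMod.pow_card, coeff_monomial]
    obtain rfl | hce := eq_or_ne c e
    · rw [if_pos le_add_self, if_pos rfl, add_tsub_cancel_right]
    rw [if_neg hce, mul_zero]
    split_ifs with hle
    swap
    · rfl
    refine mul_eq_zero_of_left (IsHomogeneous.coeff_eq_zero hA fun hdeg => hce ?_) b
    have hle' : c ≤ e := fun i => by
      have hi := hle i
      simp only [Finsupp.smul_apply, Finsupp.add_apply, indicatorExp_apply, smul_eq_mul] at hi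
      split_ifs at hi <;> lia
    obtain ⟨r, rfl⟩ := exists_add_of_le hle'
    rw [smul_add, add_left_comm, add_tsub_cancel_left, Finsupp.degree_eq_sum, sum_add_two_smul,
      sum_indicatorExp, Nat.add_eq_left, mul_eq_zero_iff_left two_ne_zero,
      sum_apply_eq_zero_iff] at hdeg
    rw [hdeg, add_zero]
  | add p q hp hq => simp only [CharTwo.add_sq, mul_add, coeff_add, hp, hq]

theorem coeff_substM_X (M : Matrix (Fin 4) (Fin 4) kk) (k j : Fin 4) :
    coeff (indicatorExp {j}) (substM M (X k)) = M k j := by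
  have hj : indicatorExp {j} = Finsupp.single j 1 := by
    ext i
    simp [Finsupp.single_apply, eq_comm]
  simp [substM, hj, coeff_sum, coeff_X, Finsupp.single_left_inj]

theorem sum_single_eq_indicatorExp_iff (f : Fin 3 → Fin 4) :
    ∑ j, Finsupp.single (f j) 1 = indicatorExp {3}ᶜ ↔
      ∃ s : Equiv.Perm (Fin 3), f = Fin.castSucc ∘ s := by
  constructor
  · intro h
    have hsurj (c : Fin 3) : ∃ j, f j = c.castSucc := by
      by_contra! hne
      have hc := DFunLike.congr_fun h c.castSucc
      have hc3 : c.castSucc ≠ 3 := Fin.castSucc_ne_last c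
      simp [hne, hc3] at hc
    choose g hg using hsurj
    have hginj : Function.Injective g := fun a b hab => Fin.castSucc_injective 3 <| by
      rw [← hg, ← hg, hab]
    let s := Equiv.ofBijective g (Finite.injective_iff_bijective.1 hginj)
    refine ⟨s.symm, funext fun j => ?_⟩
    rw [Function.comp_apply, ← hg]
    exact congrArg f (s.apply_symm_apply j).symm
  · rintro ⟨s, rfl⟩
    simp only [Function.comp_apply]
    rw [Equiv.sum_comp s fun j => Finsupp.single (Fin.castSucc j) 1]
    ext i
    fin_cases i <;> simp [Fin.sum_univ_three]

theorem omitX_eq_prod (i : Fin 4) : omitX i = ∏ j, X (i.succAbove j) := by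
  rw [omitX, prodX, ← Fin.image_succAbove_univ, Finset.prod_image
    (Fin.succAbove_right_injective.injOn)]

theorem coeff_substM_omitX (M : Matrix (Fin 4) (Fin 4) kk) (i : Fin 4) :
    coeff (indicatorExp {3}ᶜ) (substM M (omitX i)) = M.adjugate 3 i := by
  have hneg (n : ℕ) : (-1 : kk) ^ n = 1 := by rw [CharTwo.neg_eq, one_pow]
  have hsucc : (3 : Fin 4).succAbove = Fin.castSucc := Fin.succAbove_last
  rw [Matrix.adjugate_fin_succ_eq_det_submatrix, hneg, one_mul, hsucc, ← Matrix.det_transpose,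
    Matrix.det_apply', omitX_eq_prod, map_prod]
  have hX (j : Fin 3) : substM M (X (i.succAbove j)) =
      ∑ c, monomial (Finsupp.single c 1) (M (i.succAbove j) c) := by
    simp only [substM, aeval_X]
    refine Finset.sum_congr rfl fun c _ => ?_
    rw [X, smul_monomial, smul_eq_mul, mul_one]
  simp only [hX, Finset.prod_univ_sum, Fintype.piFinset_univ, ← monomial_sum_prod, coeff_sum,
    coeff_monomial, sum_single_eq_indicatorExp_iff]
  refine (Fintype.sum_of_injective
    (fun s : Equiv.Perm (Fin 3) => Fin.castSucc ∘ s) ?_ _ _ ?_ ?_).symm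
  · intro s t hst
    ext j : 1
    exact Fin.castSucc_injective 3 (congrFun hst j)
  · intro f hf
    exact if_neg fun ⟨s, hs⟩ => hf ⟨s, hs.symm⟩
  · intro s
    rw [if_pos ⟨s, rfl⟩]
    rcases Int.units_eq_one_or s.sign with hs | hs <;>
      simp [hs, CharTwo.neg_eq]

/-- The indicator vectors of `U` and `W` are a nonzero functional and a nonzero vector in its
kernel, that is, a hyperplane and a line contained in it. -/
structure IsFlag {α : Type*} [DecidableEq α] (U W : Finset α) : Prop where
  left_nonempty : U.Nonempty
  right_nonempty : W.Nonempty
  even_card_inter : Even (U ∩ W).card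

theorem IsFlag.exists_ne {α : Type*} [DecidableEq α] {U W : Finset α} (hUW : IsFlag U W) :
    ∃ p ∈ W, ∃ k ∈ U, p ≠ k := by
  by_contra! h
  obtain ⟨⟨k, hk⟩, ⟨p, hp⟩, heven⟩ := hUW
  obtain rfl := h p hp k hk
  have hcard : U ∩ W = {p} := Finset.eq_singleton_iff_unique_mem.2
    ⟨Finset.mem_inter.2 ⟨hk, hp⟩, fun i hi => h i (Finset.mem_inter.1 hi).2 p hk⟩
  rw [hcard, Finset.card_singleton] at heven
  exact Nat.not_even_one heven

theorem eq_adjugate_of_vecMul_eq_single {M : Matrix (Fin 4) (Fin 4) kk} (hM : IsUnit M)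
    {u : Fin 4 → kk} (hu : Matrix.vecMul u M = Pi.single 3 1) : M.adjugate 3 = u := by
  have hdet : M.det = 1 := by
    have h := ((Matrix.isUnit_iff_isUnit_det M).1 hM).ne_zero
    revert h
    generalize M.det = d
    decide +revert
  have h := congrArg (Matrix.vecMul · M.adjugate) hu
  simp only [Matrix.vecMul_vecMul, Matrix.mul_adjugate, hdet, one_smul, Matrix.vecMul_one,
    Matrix.single_one_vecMul] at h
  exact h.symm

/-- The columns of `M` are `1_W` followed by a basis of a complement adapted to the hyperplane
orthogonal to `1_U`: the first three columns span that hyperplane. -/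
theorem exists_flag_matrix {U W : Finset (Fin 4)} (hUW : IsFlag U W) :
    ∃ M ∈ glSet, (∀ i, M.adjugate 3 i = if i ∈ U then 1 else 0) ∧
      ∀ k, M k 0 = if k ∈ W then 1 else 0 := by
  obtain ⟨p, hp, k, hk, hpk⟩ := hUW.exists_ne
  obtain ⟨a, b, hab, hcompl⟩ := Finset.card_eq_two.1 (card_compl_pair hpk)
  obtain ⟨hap, hak⟩ : a ≠ p ∧ a ≠ k := by
    have h : a ∈ ({p, k}ᶜ : Finset (Fin 4)) := by simp [hcompl]
    simpa using h
  obtain ⟨hbp, hbk⟩ : b ≠ p ∧ b ≠ k := by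
    have h : b ∈ ({p, k}ᶜ : Finset (Fin 4)) := by simp [hcompl]
    simpa using h
  let M : Matrix (Fin 4) (Fin 4) kk := Matrix.of fun i => ![if i ∈ W then 1 else 0,
    (if i = a then 1 else 0) + (if i = k ∧ a ∈ U then 1 else 0),
    (if i = b then 1 else 0) + (if i = k ∧ b ∈ U then 1 else 0), if i = k then 1 else 0]
  have hM : IsUnit M := by
    refine Matrix.mulVec_injective_iff_isUnit.1 ((injective_iff_map_eq_zero M.mulVecLin).2
      fun x hx => ?_)
    have hrow (i : Fin 4) : ∑ j, M i j * x j = 0 := congrFun hx i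
    have hx0 : x 0 = 0 := by
      simpa [M, Fin.sum_univ_four, hp, hpk, hap.symm, hbp.symm] using hrow p
    have hx1 : x 1 = 0 := by simpa [M, Fin.sum_univ_four, hx0, hak, hab] using hrow a
    have hx2 : x 2 = 0 := by simpa [M, Fin.sum_univ_four, hx0, hbk, hab.symm] using hrow b
    have hx3 : x 3 = 0 := by simpa [M, Fin.sum_univ_four, hx0, hx1, hx2] using hrow k
    ext j
    fin_cases j <;> assumption
  have hu : Matrix.vecMul (fun i => if i ∈ U then 1 else 0) M = Pi.single 3 1 := by
    have hcard : ((U ∩ W).card : kk) = 0 := (ZMod.natCast_eq_zero_iff_even).2 hUW.even_card_inter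
    have h2 : (1 + 1 : kk) = 0 := CharTwo.add_self_eq_zero 1
    ext j
    fin_cases j
    · simp [M, Matrix.vecMul, dotProduct, ← Finset.mem_inter, ← ite_and, Finset.inter_comm W, hcard]
    · by_cases haU : a ∈ U <;>
        simp [M, Matrix.vecMul, dotProduct, mul_add, Finset.sum_add_distrib, hk, haU, h2]
    · by_cases hbU : b ∈ U <;>
        simp [M, Matrix.vecMul, dotProduct, mul_add, Finset.sum_add_distrib, hk, hbU, h2]
    · simp [M, Matrix.vecMul, dotProduct, hk]
  exact ⟨M, hM, congrFun (eq_adjugate_of_vecMul_eq_single hM hu), fun k => rfl⟩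

/-! ### Linear algebra of pairs of subsets -/

theorem eq_zero_of_triangular {R V ι μ : Type*} [Ring R] [AddCommGroup V] [Module R V]
    [Preorder μ] [WellFoundedLT μ] (rank : ι → μ) {s : Set ι} {v : ι → V} {ψ : ι → V →ₗ[R] R}
    (hdiag : ∀ i ∈ s, ψ i (v i) = 1)
    (hoff : ∀ i ∈ s, ∀ j ∈ s, ψ i (v j) ≠ 0 → j ≠ i → rank j < rank i)
    {x : V} (hx : x ∈ Submodule.span R (v '' s)) (hψ : ∀ i ∈ s, ψ i x = 0) : x = 0 := by
  obtain ⟨l, hl, rfl⟩ := (Finsupp.mem_span_image_iff_linearCombination R).1 hx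
  suffices hzero : ∀ m i, rank i = m → l i = 0 by
    rw [show l = 0 from Finsupp.ext fun i => hzero _ i rfl, map_zero]
  intro m
  induction m using WellFoundedLT.induction with
  | ind m ih =>
    rintro i rfl
    by_contra hne
    have hi : i ∈ s := hl (Finsupp.mem_support_iff.2 hne)
    have h := hψ i hi
    rw [Finsupp.linearCombination_apply, map_finsuppSum,
      Finsupp.sum_eq_single i, map_smul, hdiag i hi, smul_eq_mul, mul_one] at h
    · exact hne h
    · intro j hj hji
      rw [map_smul, smul_eq_mul]
      by_contra hψj
      exact hj (ih _ (hoff i hi j (hl (Finsupp.mem_support_iff.2 hj)) (right_ne_zero_of_mul hψj)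
        hji) j rfl)
    · simp

theorem eq_of_mem_offDiag {α R : Type*} {V : Finset α} {q : α × α → R}
    (hsymm : ∀ {i j}, i ∈ V → j ∈ V → i ≠ j → q (i, j) = q (j, i))
    (hrow : ∀ {i j k}, i ∈ V → j ∈ V → k ∈ V → i ≠ j → i ≠ k → j ≠ k → q (i, k) = q (j, k))
    {p p' : α × α} (hp : p ∈ V.offDiag) (hp' : p' ∈ V.offDiag) : q p = q p' := by
  obtain ⟨a, b⟩ := p'
  obtain ⟨ha, hb, hab⟩ := Finset.mem_offDiag.1 hp'
  have hcol {i : α} (hi : i ∈ V) (hib : i ≠ b) : q (i, b) = q (a, b) := by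
    by_cases hia : i = a
    exacts [by rw [hia], hrow hi ha hb hia hib hab]
  obtain ⟨i, k⟩ := p
  obtain ⟨hi, hk, hik⟩ := Finset.mem_offDiag.1 hp
  obtain rfl | hkb := eq_or_ne k b
  · exact hcol hi hik
  obtain rfl | hib := eq_or_ne i b
  · exact (hsymm hi hk hik).trans (hcol hk hkb)
  · exact (hsymm hi hk hik).trans <| (hrow hk hb hi hkb hik.symm hib.symm).trans <|
      (hsymm hb hi hib.symm).trans (hcol hi hib)

section PointSystem

variable {α X : Type*} [DecidableEq α] [AddCommGroup X] [Module kk X]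

/-- The nonempty subsets of `V` with at most two elements, listed as `{k, b}` with `k = b`
allowed. -/
def pairSets (V : Finset α) : Set (Finset α) := {T | ∃ k ∈ V, ∃ b ∈ V, T = {k, b}}

theorem pair_mem_pairSets {V : Finset α} {k b : α} (hk : k ∈ V) (hb : b ∈ V) :
    {k, b} ∈ pairSets V := ⟨k, hk, b, hb, rfl⟩

theorem singleton_mem_pairSets {V : Finset α} {k : α} (hk : k ∈ V) : {k} ∈ pairSets V :=
  ⟨k, hk, k, hk, (Finset.pair_eq_singleton k).symm⟩

theorem subset_of_mem_pairSets {V T : Finset α} (hT : T ∈ pairSets V) : T ⊆ V := by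
  obtain ⟨k, hk, b, hb, rfl⟩ := hT
  exact Finset.insert_subset hk (Finset.singleton_subset_iff.2 hb)

theorem nonempty_of_mem_pairSets {V T : Finset α} (hT : T ∈ pairSets V) : T.Nonempty := by
  obtain ⟨k, -, b, -, rfl⟩ := hT
  exact Finset.insert_nonempty _ _

theorem isFlag_singleton {i : α} {W : Finset α} (hW : W.Nonempty) (hi : i ∉ W) : IsFlag {i} W :=
  ⟨Finset.singleton_nonempty i, hW, by rw [Finset.singleton_inter_of_notMem hi]; exact Even.zero⟩

theorem isFlag_pair {i j : α} (hij : i ≠ j) {W : Finset α} (hW : {i, j} ⊆ W) :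
    IsFlag {i, j} W :=
  ⟨Finset.insert_nonempty _ _, (Finset.insert_nonempty _ _).mono hW, by
    rw [Finset.inter_eq_left.2 hW, Finset.card_pair hij]; exact even_two⟩

/-- Vectors `β i T` behaving like the functions `(U, W) ↦ [i ∈ U] [T ⊆ W]` on the flags of subsets
of `V`, evaluated by the functionals `χ U W`. The two relations express that
`∑ i, [i ∈ U] [i ∈ W]` vanishes on flags. -/
structure PointSystem (V : Finset α) (β : α → Finset α → X)
    (χ : Finset α → Finset α → X →ₗ[kk] kk) : Prop where
  eval_eq : ∀ {U W}, U ⊆ V → W ⊆ V → IsFlag U W → ∀ {i T}, i ∈ V → T ∈ pairSets V →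
    χ U W (β i T) = if i ∈ U ∧ T ⊆ W then 1 else 0
  sum_pair : ∀ {k}, k ∈ V → ∑ i ∈ V, β i {i, k} = 0
  sum_singleton : ∑ i ∈ V, β i {i} = 0

namespace PointSystem

variable {V : Finset α} {β : α → Finset α → X} {χ : Finset α → Finset α → X →ₗ[kk] kk}

theorem eq_sum_erase (hS : PointSystem V β χ) {k : α} (hk : k ∈ V) :
    β k {k} = ∑ i ∈ V.erase k, β i {i, k} := by
  have h := hS.sum_pair hk
  rwa [← Finset.add_sum_erase V _ hk, Finset.pair_eq_singleton, ← ZModModule.sub_eq_add,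
    sub_eq_zero] at h

theorem span_le_sup (hS : PointSystem V β χ) :
    Submodule.span kk (Set.image2 β V (pairSets V)) ≤
      Submodule.span kk ((fun p : α × Finset α => β p.1 p.2) ''
        {p | p.1 ∈ V ∧ p.2 ∈ pairSets V ∧ p.1 ∉ p.2}) ⊔
      Submodule.span kk ((fun p : α × α => β p.1 {p.1, p.2}) '' V.offDiag) := by
  have hpair {i j : α} (hi : i ∈ V) (hj : j ∈ V) (hij : i ≠ j) : β i {i, j} ∈
      Submodule.span kk ((fun p : α × α => β p.1 {p.1, p.2}) '' V.offDiag) :=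
    Submodule.subset_span ⟨(i, j), by simp [hi, hj, hij], rfl⟩
  rw [Submodule.span_le]
  rintro _ ⟨i, hi, T, hT, rfl⟩
  by_cases hiT : i ∈ T
  · refine Submodule.mem_sup_right ?_
    obtain ⟨j, hj, rfl⟩ : ∃ j ∈ V, T = {i, j} := by
      obtain ⟨k, hk, b, hb, rfl⟩ := hT
      obtain rfl | rfl : i = k ∨ i = b := by simpa using hiT
      exacts [⟨b, hb, rfl⟩, ⟨k, hk, Finset.pair_comm _ _⟩]
    obtain rfl | hij := eq_or_ne i j
    · rw [Finset.pair_eq_singleton, hS.eq_sum_erase hi]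
      exact Submodule.sum_mem _ fun j hj => hpair (Finset.mem_of_mem_erase hj) hi
        (Finset.ne_of_mem_erase hj)
    · exact hpair hi hj hij
  · exact Submodule.mem_sup_left (Submodule.subset_span ⟨(i, T), ⟨hi, hT, hiT⟩, rfl⟩)

theorem sum_offDiag (hS : PointSystem V β χ) : ∑ p ∈ V.offDiag, β p.1 {p.1, p.2} = 0 := by
  rw [Finset.sum_finset_product_right V.offDiag V fun k => V.erase k, ← hS.sum_singleton]
  · exact Finset.sum_congr rfl fun k hk => (hS.eq_sum_erase hk).symm
  · simp only [Finset.mem_offDiag, Finset.mem_erase]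
    tauto

theorem eq_zero_of_mem_span_notMem (hS : PointSystem V β χ) {x : X}
    (hx : x ∈ Submodule.span kk ((fun p : α × Finset α => β p.1 p.2) ''
      {p | p.1 ∈ V ∧ p.2 ∈ pairSets V ∧ p.1 ∉ p.2}))
    (h : ∀ i ∈ V, ∀ W ∈ pairSets V, i ∉ W → χ {i} W x = 0) : x = 0 := by
  have heval {i : α} {W : Finset α} (hi : i ∈ V) (hW : W ∈ pairSets V) (hiW : i ∉ W) {j : α}
      {T : Finset α} (hj : j ∈ V) (hT : T ∈ pairSets V) :
      χ {i} W (β j T) = if j = i ∧ T ⊆ W then 1 else 0 := by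
    simpa only [Finset.mem_singleton] using hS.eval_eq (Finset.singleton_subset_iff.2 hi)
      (subset_of_mem_pairSets hW) (isFlag_singleton (nonempty_of_mem_pairSets hW) hiW) hj hT
  refine eq_zero_of_triangular (fun p => p.2) (ψ := fun p => χ {p.1} p.2) ?_ ?_ hx
    fun ⟨i, W⟩ ⟨hi, hW, hiW⟩ => h i hi W hW hiW
  · rintro ⟨i, W⟩ ⟨hi, hW, hiW⟩
    exact (heval hi hW hiW hi hW).trans (if_pos ⟨rfl, subset_rfl⟩)
  · rintro ⟨i, W⟩ ⟨hi, hW, hiW⟩ ⟨j, T⟩ ⟨hj, hT, -⟩ hne hji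
    obtain ⟨rfl, hTW⟩ : j = i ∧ T ⊆ W := by
      by_contra hnot
      exact hne ((heval hi hW hiW hj hT).trans (if_neg hnot))
    exact lt_of_le_of_ne hTW fun hTW' => hji (congrArg (Prod.mk j) hTW')

theorem eval_sum_offDiag (hS : PointSystem V β χ) {U W : Finset α} (hU : U ⊆ V) (hW : W ⊆ V)
    (hUW : IsFlag U W) (q : α × α → kk) :
    χ U W (∑ p ∈ V.offDiag, q p • β p.1 {p.1, p.2}) =
      ∑ p ∈ W.offDiag with p.1 ∈ U, q p := by
  have hsub : (W.offDiag.filter fun p => p.1 ∈ U) ⊆ V.offDiag :=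
    (Finset.filter_subset _ _).trans (Finset.offDiag_mono hW)
  rw [map_sum, ← Finset.sum_subset hsub]
  · refine Finset.sum_congr rfl fun ⟨i, k⟩ hp => ?_
    simp only [Finset.mem_filter, Finset.mem_offDiag] at hp
    rw [map_smul, hS.eval_eq hU hW hUW (hU hp.2) (pair_mem_pairSets (hU hp.2) (hW hp.1.2.1)),
      if_pos ⟨hp.2, by grind⟩, smul_eq_mul, mul_one]
  · intro ⟨i, k⟩ hp hnot
    simp only [Finset.mem_filter, Finset.mem_offDiag] at hp hnot
    rw [map_smul, hS.eval_eq hU hW hUW hp.1 (pair_mem_pairSets hp.1 hp.2.1), if_neg (by grind),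
      smul_zero]

theorem eq_zero_of_mem_span_offDiag (hS : PointSystem V β χ) {y : X}
    (hy : y ∈ Submodule.span kk ((fun p : α × α => β p.1 {p.1, p.2}) '' V.offDiag))
    (h : ∀ {U W}, U ⊆ V → W ⊆ V → IsFlag U W → χ U W y = 0) : y = 0 := by
  obtain ⟨q, hqV, rfl⟩ := (Finsupp.mem_span_image_iff_linearCombination kk).1 hy
  rw [Finsupp.linearCombination_apply_of_mem_supported _ hqV] at h ⊢
  have hq {i j : α} {W : Finset α} (hij : i ≠ j) (hsub : {i, j} ⊆ W) (hW : W ⊆ V) :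
      ∑ p ∈ W.offDiag with p.1 ∈ ({i, j} : Finset α), q p = 0 := by
    rw [← hS.eval_sum_offDiag (hsub.trans hW) hW (isFlag_pair hij hsub),
      h (hsub.trans hW) hW (isFlag_pair hij hsub)]
  have hsymm {i j : α} (hi : i ∈ V) (hj : j ∈ V) (hij : i ≠ j) : q (i, j) = q (j, i) := by
    have hsum := hq hij subset_rfl (by grind)
    have hset : {p ∈ ({i, j} : Finset α).offDiag | p.1 ∈ ({i, j} : Finset α)} =
        {(i, j), (j, i)} := by
      ext ⟨a, b⟩
      simp only [Finset.mem_filter, Finset.mem_offDiag, Finset.mem_insert, Finset.mem_singleton,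
        Prod.mk.injEq]
      grind
    rwa [hset, Finset.sum_pair (by grind), ← CharTwo.sub_eq_add, sub_eq_zero] at hsum
  have hrow {i j k : α} (hi : i ∈ V) (hj : j ∈ V) (hk : k ∈ V) (hij : i ≠ j) (hik : i ≠ k)
      (hjk : j ≠ k) : q (i, k) = q (j, k) := by
    have hsum := hq hij (W := {i, j, k}) (by grind) (by grind)
    have hset : {p ∈ ({i, j, k} : Finset α).offDiag | p.1 ∈ ({i, j} : Finset α)} =
        {(i, j), (j, i), (i, k), (j, k)} := by
      ext ⟨a, b⟩
      simp only [Finset.mem_filter, Finset.mem_offDiag, Finset.mem_insert, Finset.mem_singleton,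
        Prod.mk.injEq]
      grind
    rw [hset, Finset.sum_insert (by grind), Finset.sum_insert (by grind),
      Finset.sum_pair (by grind), ← add_assoc, hsymm hi hj hij, CharTwo.add_self_eq_zero, zero_add,
      ← CharTwo.sub_eq_add, sub_eq_zero] at hsum
    exact hsum
  obtain hempty | ⟨p₀, hp₀⟩ := V.offDiag.eq_empty_or_nonempty
  · rw [hempty, Finset.sum_empty]
  rw [Finset.sum_congr rfl fun p hp => congrArg (· • _) (eq_of_mem_offDiag hsymm hrow hp hp₀),
    ← Finset.smul_sum, hS.sum_offDiag, smul_zero]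

theorem eq_zero_of_mem_span (hS : PointSystem V β χ) {x : X}
    (hx : x ∈ Submodule.span kk (Set.image2 β V (pairSets V)))
    (h : ∀ {U W}, U ⊆ V → W ⊆ V → IsFlag U W → χ U W x = 0) : x = 0 := by
  obtain ⟨b, hb, y, hy, rfl⟩ := Submodule.mem_sup.1 (hS.span_le_sup hx)
  have hb0 : b = 0 := by
    refine hS.eq_zero_of_mem_span_notMem hb fun i hi W hW hiW => ?_
    have hU : {i} ⊆ V := Finset.singleton_subset_iff.2 hi
    have hW' := subset_of_mem_pairSets hW
    have hflag := isFlag_singleton (nonempty_of_mem_pairSets hW) hiW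
    suffices hy0 : y ∈ LinearMap.ker (χ {i} W) by
      rw [← h hU hW' hflag, map_add, LinearMap.mem_ker.1 hy0, add_zero]
    refine Submodule.span_le.2 ?_ hy
    rintro _ ⟨⟨j, k⟩, hjk, rfl⟩
    simp only [Finset.mem_coe, Finset.mem_offDiag] at hjk
    refine (hS.eval_eq hU hW' hflag hjk.1 (pair_mem_pairSets hjk.1 hjk.2.1)).trans (if_neg ?_)
    rintro ⟨hji, hsub⟩
    exact hiW (Finset.mem_singleton.1 hji ▸ hsub (Finset.mem_insert_self j _))
  rw [hb0, zero_add] at h ⊢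
  exact hS.eq_zero_of_mem_span_offDiag hy h

end PointSystem
end PointSystem

theorem sum_sum_eq_sum_diag {α X : Type*} [Fintype α] [AddCommGroup X] [Module kk X]
    {f : α → α → X} (hf : ∀ a b, f a b = f b a) : ∑ a, ∑ b, f a b = ∑ a, f a a := by
  classical
  have hoff : ∑ p ∈ (Finset.univ : Finset α).offDiag, f p.1 p.2 = 0 :=
    Finset.sum_involution (fun p _ => p.swap)
      (fun p _ => by rw [Prod.fst_swap, Prod.snd_swap, hf p.2, ZModModule.add_self])
      (fun p hp _ h => (Finset.mem_offDiag.1 hp).2.2 (congrArg Prod.snd h))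
      (fun p hp => by simpa [eq_comm] using hp) (fun p _ => p.swap_swap)
  rw [← Fintype.sum_prod_type', ← Finset.univ_product_univ, ← Finset.diag_union_offDiag,
    Finset.sum_union (Finset.disjoint_diag_offDiag _), hoff, add_zero, Finset.sum_diag]

section FlagSystem

variable {α X : Type*} [DecidableEq α] [AddCommGroup X] [Module kk X]

theorem IsFlag.symm {U W : Finset α} (h : IsFlag U W) : IsFlag W U :=
  ⟨h.right_nonempty, h.left_nonempty, Finset.inter_comm U W ▸ h.even_card_inter⟩

theorem pairSets_mono {V V' : Finset α} (h : V ⊆ V') : pairSets V ⊆ pairSets V' :=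
  fun _ ⟨k, hk, b, hb, hT⟩ => ⟨k, h hk, b, h hb, hT⟩

theorem mem_pairSets_or {V : Finset α} (o : α) {S : Finset α} (hS : S ∈ pairSets V) :
    S ∈ pairSets (V.erase o) ∨ ∃ a ∈ V, S = {a, o} := by
  obtain ⟨k, hk, b, hb, rfl⟩ := hS
  obtain rfl | hko := eq_or_ne k o
  · exact Or.inr ⟨b, hb, Finset.pair_comm _ _⟩
  obtain rfl | hbo := eq_or_ne b o
  · exact Or.inr ⟨k, hk, rfl⟩
  · exact Or.inl (pair_mem_pairSets (Finset.mem_erase.2 ⟨hko, hk⟩) (Finset.mem_erase.2 ⟨hbo, hb⟩))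

theorem notMem_of_mem_pairSets_erase {V : Finset α} {o : α} {S : Finset α}
    (hS : S ∈ pairSets (V.erase o)) : o ∉ S := fun h =>
  Finset.notMem_erase o V (subset_of_mem_pairSets hS h)

/-- For fixed `o`, the combination of `θ {i} T` and `θ {i, o} T` on which every functional `φ U W`
with `o ∈ U` vanishes. -/
def pointVec (θ : Finset α → Finset α → X) (o i : α) (T : Finset α) : X :=
  θ {i} T + θ {i, o} T

/-- For fixed `o`, a combination of functionals of flags that takes the value `[S ⊆ U] [T ⊆ W]` on
`θ S T` for all `U`, `W` not containing `o`, and vanishes on the vectors `pointVec θ o i T`. -/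
def avoidFunctional (φ : Finset α → Finset α → X →ₗ[kk] kk) (o : α) (U W : Finset α) :
    X →ₗ[kk] kk :=
  if Even (U ∩ W).card then φ U W + φ (insert o U) W + φ U (insert o W)
  else φ (insert o U) (insert o W)

theorem avoidFunctional_flip (φ : Finset α → Finset α → X →ₗ[kk] kk) (o : α) (U W : Finset α) :
    avoidFunctional (flip φ) o W U = avoidFunctional φ o U W := by
  simp only [avoidFunctional, flip, Finset.inter_comm W U, add_right_comm]

variable [Fintype α]

/-- Vectors `θ S T` behaving like the functions `(U, W) ↦ [S ⊆ U] [T ⊆ W]` on flags, evaluated by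
the functionals `φ U W`. The relations express that `∑ i, [i ∈ U] [i ∈ W]` vanishes on flags. -/
structure FlagSystem (θ : Finset α → Finset α → X) (φ : Finset α → Finset α → X →ₗ[kk] kk) :
    Prop where
  eval_eq : ∀ {U W}, IsFlag U W → ∀ {S T}, S ∈ pairSets Finset.univ → T ∈ pairSets Finset.univ →
    φ U W (θ S T) = if S ⊆ U ∧ T ⊆ W then 1 else 0
  sum_both : ∀ a b, ∑ i, θ {a, i} {i, b} = 0
  sum_left : ∀ a, ∑ i, θ {a, i} {i} = 0
  sum_right : ∀ b, ∑ i, θ {i} {i, b} = 0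

theorem isFlag_or {o : α} {U W : Finset α} (hU : U ∈ pairSets (Finset.univ.erase o))
    (hW : W ∈ pairSets (Finset.univ.erase o)) :
    Even (U ∩ W).card ∧ IsFlag U W ∧ IsFlag (insert o U) W ∧ IsFlag U (insert o W) ∨
      ¬Even (U ∩ W).card ∧ IsFlag (insert o U) (insert o W) := by
  have hUo := notMem_of_mem_pairSets_erase hU
  have hWo := notMem_of_mem_pairSets_erase hW
  have hU' := nonempty_of_mem_pairSets hU
  have hW' := nonempty_of_mem_pairSets hW
  by_cases heven : Even (U ∩ W).card
  · refine Or.inl ⟨heven, ⟨hU', hW', heven⟩, ⟨Finset.insert_nonempty _ _, hW', ?_⟩,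
      ⟨hU', Finset.insert_nonempty _ _, ?_⟩⟩
    · rwa [Finset.insert_inter_of_notMem hWo]
    · rwa [Finset.inter_insert_of_notMem hUo]
  · refine Or.inr ⟨heven, Finset.insert_nonempty _ _, Finset.insert_nonempty _ _, ?_⟩
    rw [← Finset.insert_inter_distrib, Finset.card_insert_of_notMem (by simp [hUo])]
    exact (Nat.not_even_iff_odd.1 heven).add_one

/-- The span of the vectors `θ S T` with `o ∉ S` and `o ∉ T`. -/
def avoidSpan (θ : Finset α → Finset α → X) (o : α) : Submodule kk X :=
  Submodule.span kk (Set.image2 θ (pairSets (Finset.univ.erase o))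
    (pairSets (Finset.univ.erase o)))

/-- The span of the vectors `pointVec θ o i T` with `i ≠ o` and `o ∉ T`. -/
def pointSpan (θ : Finset α → Finset α → X) (o : α) : Submodule kk X :=
  Submodule.span kk (Set.image2 (pointVec θ o) (Finset.univ.erase o : Finset α)
    (pairSets (Finset.univ.erase o)))

/-- The span of the vectors `θ {o} T` with `o ∉ T`. -/
def singleSpan (θ : Finset α → Finset α → X) (o : α) : Submodule kk X :=
  Submodule.span kk (θ {o} '' pairSets (Finset.univ.erase o))

theorem mem_of_span_le {θ : Finset α → Finset α → X} {o : α} {G : Submodule kk X}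
    (havoid : avoidSpan θ o ≤ G) (hpoint : pointSpan θ o ≤ G) (hsingle : singleSpan θ o ≤ G)
    {S T : Finset α} (hS : S ∈ pairSets Finset.univ) (hT : T ∈ pairSets (Finset.univ.erase o)) :
    θ S T ∈ G := by
  obtain hS | ⟨i, -, rfl⟩ := mem_pairSets_or o hS
  · exact havoid (Submodule.subset_span ⟨S, hS, T, hT, rfl⟩)
  obtain rfl | hi := eq_or_ne i o
  · rw [Finset.pair_eq_singleton]
    exact hsingle (Submodule.subset_span ⟨T, hT, rfl⟩)
  · have hi' : i ∈ Finset.univ.erase o := by simp [hi]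
    have hsmall : θ {i} T ∈ G := havoid <| Submodule.subset_span
      ⟨{i}, singleton_mem_pairSets hi', T, hT, rfl⟩
    exact (Submodule.add_mem_iff_right G hsmall).1
      (hpoint (Submodule.subset_span ⟨i, hi', T, hT, rfl⟩))

theorem avoidSpan_flip (θ : Finset α → Finset α → X) (o : α) :
    avoidSpan (flip θ) o = avoidSpan θ o :=
  congrArg (Submodule.span kk) (Set.image2_swap _ _ _).symm

namespace FlagSystem

variable {θ : Finset α → Finset α → X} {φ : Finset α → Finset α → X →ₗ[kk] kk}

protected theorem flip (h : FlagSystem θ φ) :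
    FlagSystem (flip θ) (flip φ) where
  eval_eq hUW _ _ hS hT := (h.eval_eq hUW.symm hT hS).trans (by simp only [and_comm])
  sum_both a b := by simpa only [flip, Finset.pair_comm] using h.sum_both b a
  sum_left a := by simpa only [flip, Finset.pair_comm] using h.sum_right a
  sum_right b := by simpa only [flip, Finset.pair_comm] using h.sum_left b

theorem mem_of_forall_mem_pairSets_erase (h : FlagSystem θ φ) (o : α) {G : Submodule kk X}
    (hleft : ∀ S ∈ pairSets Finset.univ, ∀ T ∈ pairSets (Finset.univ.erase o), θ S T ∈ G)
    (hright : ∀ S ∈ pairSets (Finset.univ.erase o), ∀ T ∈ pairSets Finset.univ, θ S T ∈ G)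
    {S T : Finset α} (hS : S ∈ pairSets Finset.univ) (hT : T ∈ pairSets Finset.univ) :
    θ S T ∈ G := by
  have hpair (i j : α) : {i, j} ∈ pairSets Finset.univ :=
    pair_mem_pairSets (Finset.mem_univ i) (Finset.mem_univ j)
  have hpair' {i j : α} (hi : i ≠ o) (hj : j ≠ o) : {i, j} ∈ pairSets (Finset.univ.erase o) :=
    pair_mem_pairSets (by simp [hi]) (by simp [hj])
  have hsum {a b : α} (hi : ∀ i ≠ o, θ {a, i} {i, b} ∈ G) : θ {a, o} {o, b} ∈ G := by
    have hzero := h.sum_both a b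
    rw [← Finset.add_sum_erase _ _ (Finset.mem_univ o)] at hzero
    rw [eq_neg_of_add_eq_zero_left hzero]
    exact G.neg_mem (G.sum_mem fun i hio => hi i (Finset.ne_of_mem_erase hio))
  have hne {a b : α} (hab : a ≠ o ∨ b ≠ o) : θ {a, o} {o, b} ∈ G :=
    hsum fun i hi => hab.elim (fun ha => hright _ (hpair' ha hi) _ (hpair i b))
      fun hb => hleft _ (hpair a i) _ (hpair' hi hb)
  obtain hS' | ⟨a, -, rfl⟩ := mem_pairSets_or o hS
  · exact hright _ hS' _ hT
  obtain hT' | ⟨b, -, rfl⟩ := mem_pairSets_or o hT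
  · exact hleft _ hS _ hT'
  rw [Finset.pair_comm b o]
  by_cases hab : a ≠ o ∨ b ≠ o
  · exact hne hab
  obtain ⟨rfl, rfl⟩ : a = o ∧ b = o := by simpa [not_or] using hab
  refine hsum fun i hi => ?_
  simpa only [Finset.pair_comm b i] using hne (b := i) (Or.inl hi)

theorem eval_pointVec (h : FlagSystem θ φ) {o i : α} {U W T : Finset α} (hUW : IsFlag U W)
    (hT : T ∈ pairSets Finset.univ) :
    φ U W (pointVec θ o i T) = if i ∈ U ∧ o ∉ U ∧ T ⊆ W then 1 else 0 := by
  have hi : {i} ∈ pairSets (Finset.univ : Finset α) := singleton_mem_pairSets (Finset.mem_univ i)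
  have hio : {i, o} ∈ pairSets (Finset.univ : Finset α) :=
    pair_mem_pairSets (Finset.mem_univ i) (Finset.mem_univ o)
  rw [pointVec, map_add, h.eval_eq hUW hi hT, h.eval_eq hUW hio hT]
  by_cases ho : o ∈ U
  · simp [Finset.insert_subset_iff, ho, CharTwo.add_self_eq_zero]
  · simp [Finset.insert_subset_iff, ho]

theorem avoidFunctional_apply (h : FlagSystem θ φ) {o : α} {U W S T : Finset α}
    (hU : U ∈ pairSets (Finset.univ.erase o)) (hW : W ∈ pairSets (Finset.univ.erase o))
    (hS : S ∈ pairSets (Finset.univ.erase o)) (hT : T ∈ pairSets (Finset.univ.erase o)) :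
    avoidFunctional φ o U W (θ S T) = if S ⊆ U ∧ T ⊆ W then 1 else 0 := by
  have hmono : pairSets (Finset.univ.erase o) ⊆ pairSets (Finset.univ : Finset α) :=
    pairSets_mono (Finset.subset_univ _)
  have heval {U W : Finset α} (hUW : IsFlag U W) := h.eval_eq hUW (hmono hS) (hmono hT)
  have hSo := notMem_of_mem_pairSets_erase hS
  have hTo := notMem_of_mem_pairSets_erase hT
  obtain ⟨heven, hflag⟩ | ⟨hodd, hflag⟩ := isFlag_or hU hW
  · rw [avoidFunctional, if_pos heven, LinearMap.add_apply, LinearMap.add_apply, heval hflag.1,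
      heval hflag.2.1, heval hflag.2.2]
    simp only [Finset.subset_insert_iff_of_notMem hSo, Finset.subset_insert_iff_of_notMem hTo,
      CharTwo.add_self_eq_zero, zero_add]
  · rw [avoidFunctional, if_neg hodd, heval hflag]
    simp only [Finset.subset_insert_iff_of_notMem hSo, Finset.subset_insert_iff_of_notMem hTo]

theorem avoidFunctional_pointVec (h : FlagSystem θ φ) {o i : α} {U W T : Finset α}
    (hU : U ∈ pairSets (Finset.univ.erase o)) (hW : W ∈ pairSets (Finset.univ.erase o))
    (hT : T ∈ pairSets (Finset.univ.erase o)) :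
    avoidFunctional φ o U W (pointVec θ o i T) = 0 := by
  have hT' := pairSets_mono (Finset.subset_univ _) hT
  have hTo := notMem_of_mem_pairSets_erase hT
  obtain ⟨heven, hflag⟩ | ⟨hodd, hflag⟩ := isFlag_or hU hW
  · rw [avoidFunctional, if_pos heven, LinearMap.add_apply, LinearMap.add_apply,
      h.eval_pointVec hflag.1 hT', h.eval_pointVec hflag.2.1 hT', h.eval_pointVec hflag.2.2 hT']
    simp [Finset.subset_insert_iff_of_notMem hTo, CharTwo.add_self_eq_zero]
  · rw [avoidFunctional, if_neg hodd, h.eval_pointVec hflag hT', if_neg (by simp)]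

theorem eq_zero_of_mem_avoidSpan (h : FlagSystem θ φ) {o : α} {x : X}
    (hx : x ∈ avoidSpan θ o)
    (hzero : ∀ U ∈ pairSets (Finset.univ.erase o), ∀ W ∈ pairSets (Finset.univ.erase o),
      avoidFunctional φ o U W x = 0) : x = 0 := by
  rw [avoidSpan, ← Set.image_prod] at hx
  refine eq_zero_of_triangular id (ψ := fun p => avoidFunctional φ o p.1 p.2) ?_ ?_ hx
    fun p hp => hzero _ hp.1 _ hp.2
  · intro p hp
    rw [h.avoidFunctional_apply hp.1 hp.2 hp.1 hp.2, if_pos ⟨subset_rfl, subset_rfl⟩]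
  · intro p hp p' hp' hne hpp'
    refine lt_of_le_of_ne ?_ hpp'
    by_contra hle
    exact hne ((h.avoidFunctional_apply hp.1 hp.2 hp'.1 hp'.2).trans (if_neg hle))

theorem pointSystem (h : FlagSystem θ φ) (o : α) :
    PointSystem (Finset.univ.erase o) (pointVec θ o) (fun U W => φ U (insert o W)) where
  eval_eq {U W} hU _ hUW {i T} _ hT := by
    have hUo : o ∉ U := fun ho => Finset.notMem_erase o _ (hU ho)
    have hflag : IsFlag U (insert o W) := ⟨hUW.left_nonempty, Finset.insert_nonempty _ _, by
      rw [Finset.inter_insert_of_notMem hUo]; exact hUW.even_card_inter⟩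
    rw [h.eval_pointVec hflag (pairSets_mono (Finset.subset_univ _) hT)]
    simp [Finset.subset_insert_iff_of_notMem (notMem_of_mem_pairSets_erase hT), hUo]
  sum_pair {k} _ := by
    have hright := h.sum_right k
    have hboth := h.sum_both o k
    rw [← Finset.add_sum_erase _ _ (Finset.mem_univ o)] at hright hboth
    rw [Finset.pair_eq_singleton] at hboth
    simp only [pointVec, Finset.sum_add_distrib, Finset.pair_comm _ o]
    rw [eq_neg_of_add_eq_zero_right hright, eq_neg_of_add_eq_zero_right hboth,
      ZModModule.add_self]
  sum_singleton := by
    have hdiag : ∑ i, θ {i} {i} = 0 := by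
      have hsum := sum_sum_eq_sum_diag (f := fun a i => θ {a, i} {i, a})
        fun a b => by rw [Finset.pair_comm a b]
      simpa only [h.sum_both, Finset.sum_const_zero, Finset.pair_eq_singleton, eq_comm] using hsum
    have hleft := h.sum_left o
    rw [← Finset.add_sum_erase _ _ (Finset.mem_univ o)] at hdiag hleft
    rw [Finset.pair_eq_singleton] at hleft
    simp only [pointVec, Finset.sum_add_distrib, Finset.pair_comm _ o]
    rw [eq_neg_of_add_eq_zero_right hdiag, eq_neg_of_add_eq_zero_right hleft,
      ZModModule.add_self]

theorem eq_zero_of_mem_pointSpan (h : FlagSystem θ φ) {o : α} {x : X} (hx : x ∈ pointSpan θ o)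
    (hzero : ∀ {U W}, o ∈ W → IsFlag U W → φ U W x = 0) : x = 0 := by
  refine (h.pointSystem o).eq_zero_of_mem_span hx fun {U W} hU _ hUW =>
    hzero (Finset.mem_insert_self o W) ⟨hUW.left_nonempty, Finset.insert_nonempty _ _, ?_⟩
  rw [Finset.inter_insert_of_notMem fun ho => Finset.notMem_erase o _ (hU ho)]
  exact hUW.even_card_inter

theorem eq_zero_of_mem_singleSpan (h : FlagSystem θ φ) {o : α} {x : X}
    (hx : x ∈ singleSpan θ o)
    (hzero : ∀ W ∈ pairSets (Finset.univ.erase o), φ {o} W x = 0) : x = 0 := by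
  have heval {W T : Finset α} (hW : W ∈ pairSets (Finset.univ.erase o))
      (hT : T ∈ pairSets (Finset.univ.erase o)) :=
    h.eval_eq (isFlag_singleton (nonempty_of_mem_pairSets hW) (notMem_of_mem_pairSets_erase hW))
      (singleton_mem_pairSets (Finset.mem_univ o)) (pairSets_mono (Finset.subset_univ _) hT)
  refine eq_zero_of_triangular id (ψ := fun W => φ {o} W) ?_ ?_ hx hzero
  · exact fun W hW => (heval hW hW).trans (if_pos ⟨subset_rfl, subset_rfl⟩)
  · intro W hW T hT hne hTW
    refine lt_of_le_of_ne ?_ hTW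
    by_contra hle
    exact hne ((heval hW hT).trans (if_neg fun hand => hle hand.2))

theorem span_le (h : FlagSystem θ φ) (o : α) :
    Submodule.span kk (Set.image2 θ (pairSets Finset.univ) (pairSets Finset.univ)) ≤
      avoidSpan θ o ⊔ pointSpan θ o ⊔ pointSpan (flip θ) o ⊔ singleSpan θ o ⊔
        singleSpan (flip θ) o := by
  rw [Submodule.span_le]
  rintro _ ⟨S, hS, T, hT, rfl⟩
  refine h.mem_of_forall_mem_pairSets_erase o (fun S hS T hT => ?_) (fun S hS T hT => ?_) hS hT
  · exact mem_of_span_le (by order) (by order) (by order) hS hT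
  · refine mem_of_span_le (θ := flip θ) ?_ (by order) (by order) hT hS
    rw [avoidSpan_flip]
    order

theorem apply_eq_zero_of_mem_pointSpan (h : FlagSystem θ φ) {o : α} {U W : Finset α}
    (hUW : IsFlag U W) (ho : o ∈ U) {x : X} (hx : x ∈ pointSpan θ o) : φ U W x = 0 := by
  refine LinearMap.eqOn_span (g := 0) ?_ hx
  rintro _ ⟨i, -, T, hT, rfl⟩
  rw [h.eval_pointVec hUW (pairSets_mono (Finset.subset_univ _) hT), if_neg fun hi => hi.2.1 ho,
    LinearMap.zero_apply]

theorem avoidFunctional_eq_zero_of_mem_pointSpan (h : FlagSystem θ φ) {o : α} {U W : Finset α}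
    (hU : U ∈ pairSets (Finset.univ.erase o)) (hW : W ∈ pairSets (Finset.univ.erase o)) {x : X}
    (hx : x ∈ pointSpan θ o) : avoidFunctional φ o U W x = 0 := by
  refine LinearMap.eqOn_span (g := 0) ?_ hx
  rintro _ ⟨i, -, T, hT, rfl⟩
  exact h.avoidFunctional_pointVec hU hW hT

theorem avoidFunctional_eq_zero {o : α} {U W : Finset α}
    (hU : U ∈ pairSets (Finset.univ.erase o)) (hW : W ∈ pairSets (Finset.univ.erase o)) {x : X}
    (hx : ∀ {U W}, IsFlag U W → φ U W x = 0) : avoidFunctional φ o U W x = 0 := by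
  obtain ⟨heven, hflag⟩ | ⟨hodd, hflag⟩ := isFlag_or hU hW
  · rw [avoidFunctional, if_pos heven, LinearMap.add_apply, LinearMap.add_apply, hx hflag.1,
      hx hflag.2.1, hx hflag.2.2, add_zero, add_zero]
  · rw [avoidFunctional, if_neg hodd, hx hflag]

theorem eq_zero_of_add_eq (h : FlagSystem θ φ) {o : α} {a b c x : X} (ha : a ∈ avoidSpan θ o)
    (hb : b ∈ pointSpan θ o) (hc : c ∈ pointSpan (flip θ) o) (hx : a + b + c = x)
    (hzero : ∀ {U W}, IsFlag U W → φ U W x = 0) : x = 0 := by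
  have ha0 : a = 0 := by
    refine h.eq_zero_of_mem_avoidSpan ha fun U hU W hW => ?_
    have hbUW := h.avoidFunctional_eq_zero_of_mem_pointSpan hU hW hb
    have hcUW := h.flip.avoidFunctional_eq_zero_of_mem_pointSpan hW hU hc
    rw [avoidFunctional_flip] at hcUW
    simpa only [← hx, map_add, hbUW, hcUW, add_zero] using avoidFunctional_eq_zero hU hW hzero
  rw [ha0, zero_add] at hx
  have hb0 : b = 0 := h.eq_zero_of_mem_pointSpan hb fun {U W} ho hUW => by
    have hcUW : φ U W c = 0 := h.flip.apply_eq_zero_of_mem_pointSpan hUW.symm ho hc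
    simpa only [← hx, map_add, hcUW, add_zero] using hzero hUW
  have hc0 : c = 0 := h.flip.eq_zero_of_mem_pointSpan hc fun {W U} _ hWU => by
    have hcUW := hzero hWU.symm
    rwa [← hx, hb0, zero_add] at hcUW
  rw [← hx, hb0, hc0, zero_add]

theorem sup_le_ker (h : FlagSystem θ φ) {o : α} {W : Finset α}
    (hW : W ∈ pairSets (Finset.univ.erase o)) :
    avoidSpan θ o ⊔ pointSpan θ o ⊔ pointSpan (flip θ) o ⊔ singleSpan (flip θ) o ≤
      LinearMap.ker (φ {o} W) := by
  have hflag := isFlag_singleton (nonempty_of_mem_pairSets hW) (notMem_of_mem_pairSets_erase hW)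
  have hmono := pairSets_mono (Finset.subset_univ (Finset.univ.erase o))
  have hsub {S : Finset α} (hS : S ∈ pairSets (Finset.univ.erase o)) : ¬S ⊆ {o} := by
    rw [(nonempty_of_mem_pairSets hS).subset_singleton_iff]
    rintro rfl
    exact notMem_of_mem_pairSets_erase hS (Finset.mem_singleton_self o)
  have ho : {o} ∈ pairSets (Finset.univ : Finset α) := singleton_mem_pairSets (Finset.mem_univ o)
  refine sup_le (sup_le (sup_le ?_ fun x hx => ?_) ?_) ?_
  · rw [avoidSpan, Submodule.span_le]
    rintro _ ⟨S, hS, T, hT, rfl⟩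
    exact (h.eval_eq hflag (hmono hS) (hmono hT)).trans (if_neg fun hST => hsub hS hST.1)
  · exact h.apply_eq_zero_of_mem_pointSpan hflag (Finset.mem_singleton_self o) hx
  · rw [pointSpan, Submodule.span_le]
    rintro _ ⟨k, -, S, hS, rfl⟩
    exact (h.flip.eval_pointVec hflag.symm (hmono hS)).trans (if_neg fun hk => hsub hS hk.2.2)
  · rw [singleSpan, Submodule.span_le]
    rintro _ ⟨S, hS, rfl⟩
    exact (h.eval_eq hflag (hmono hS) ho).trans (if_neg fun hST => hsub hS hST.1)

theorem eq_zero_of_mem_singleSpan_of_add_eq (h : FlagSystem θ φ) {o : α} {y p x : X}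
    (hy : y ∈ avoidSpan θ o ⊔ pointSpan θ o ⊔ pointSpan (flip θ) o ⊔ singleSpan (flip θ) o)
    (hp : p ∈ singleSpan θ o) (hx : y + p = x) (hzero : ∀ {U W}, IsFlag U W → φ U W x = 0) :
    p = 0 := by
  refine h.eq_zero_of_mem_singleSpan hp fun W hW => ?_
  have hflag := isFlag_singleton (nonempty_of_mem_pairSets hW) (notMem_of_mem_pairSets_erase hW)
  have hyW : φ {o} W y = 0 := h.sup_le_ker hW hy
  simpa only [← hx, map_add, hyW, zero_add] using hzero hflag

theorem eq_zero_of_mem_span [Nonempty α] (h : FlagSystem θ φ) {x : X}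
    (hx : x ∈ Submodule.span kk (Set.image2 θ (pairSets Finset.univ) (pairSets Finset.univ)))
    (hzero : ∀ {U W}, IsFlag U W → φ U W x = 0) : x = 0 := by
  obtain ⟨o⟩ := ‹Nonempty α›
  obtain ⟨y', hy', r, hr, rfl⟩ := Submodule.mem_sup.1 (h.span_le o hx)
  obtain ⟨y, hy, p, hp, rfl⟩ := Submodule.mem_sup.1 hy'
  obtain ⟨ab, hab, c, hc, rfl⟩ := Submodule.mem_sup.1 hy
  obtain ⟨a, ha, b, hb, rfl⟩ := Submodule.mem_sup.1 hab
  obtain rfl : p = 0 := by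
    refine h.eq_zero_of_mem_singleSpan_of_add_eq (Submodule.add_mem_sup hy hr) hp ?_ hzero
    abel
  have hr0 : r = 0 := by
    refine h.flip.eq_zero_of_mem_singleSpan_of_add_eq ?_ hr rfl fun hUW => hzero hUW.symm
    rw [avoidSpan_flip]
    change _ ∈ avoidSpan θ o ⊔ pointSpan (flip θ) o ⊔ pointSpan θ o ⊔ singleSpan θ o
    rw [add_zero, add_right_comm]
    exact Submodule.mem_sup_left (Submodule.add_mem_sup (Submodule.add_mem_sup ha hc) hb)
  rw [hr0, add_zero, add_zero] at hzero ⊢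
  exact h.eq_zero_of_add_eq ha hb hc rfl hzero

end FlagSystem
end FlagSystem

/-! ### Invariant classes and words -/

/-- `f` represents a `GL_4(F_2)`-invariant class modulo `hitAddLow n w`. -/
def IsInvariantMod (n : ℕ) (w : ℕ → ℕ) (f : P4) : Prop :=
  ∀ M ∈ glSet, substM M f - f ∈ hitAddLow n w

theorem isInvariantMod_of_mem_hitAddLow {n : ℕ} {w : ℕ → ℕ} {f : P4} (hf : f ∈ hitAddLow n w) :
    IsInvariantMod n w f := fun M _ => Submodule.sub_mem _ (substM_mem_hitAddLow M hf) hf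

theorem IsInvariantMod.sub {n : ℕ} {w : ℕ → ℕ} {f g : P4} (hf : IsInvariantMod n w f)
    (hg : IsInvariantMod n w g) : IsInvariantMod n w (f - g) := fun M hM => by
  rw [map_sub, sub_sub_sub_comm]
  exact Submodule.sub_mem _ (hf M hM) (hg M hM)

theorem IsInvariantMod.coeff_substM {n : ℕ} {w : ℕ → ℕ} {f : P4} (hf : IsInvariantMod n w f)
    {e : Fin 4 →₀ ℕ} (he : IsSpike e) (hw : wv e = w) {M : Matrix (Fin 4) (Fin 4) kk}
    (hM : M ∈ glSet) : coeff e (substM M f) = coeff e f := by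
  rw [← sub_eq_zero, ← coeff_sub]
  exact he.coeff_eq_zero hw (hf M hM)

theorem QwInv_eq_bot {n : ℕ} {w : ℕ → ℕ} {s : Set P4} (hs : Pw n w ≤ Submodule.span kk s ⊔ PwLt n w)
    (h : ∀ f ∈ Submodule.span kk s, IsInvariantMod n w f → f ∈ hitAddLow n w) :
    QwInv n w glSet = ⊥ := by
  rw [eq_bot_iff]
  rintro _ ⟨⟨f, hf⟩, hinv, rfl⟩
  have hf' : IsInvariantMod n w f := fun M hM =>
    (mem_wDenom.1 ((Submodule.mem_iInf _).1 ((Submodule.mem_iInf _).1 hinv M) hM)).2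
  rw [Submodule.mem_bot]
  refine (Submodule.Quotient.mk_eq_zero _).2 (mem_wDenom.2 ⟨hf, ?_⟩)
  obtain ⟨g, hg, d, hd, rfl⟩ := Submodule.mem_sup.1 (hs hf)
  have hd' := PwLt_le_hitAddLow n w hd
  refine Submodule.add_mem _ (h g hg ?_) hd'
  simpa only [add_sub_cancel_right] using hf'.sub (isInvariantMod_of_mem_hitAddLow hd')

theorem Pw_zero_le : Pw 0 0 ≤ Submodule.span kk {1} ⊔ PwLt 0 0 := by
  refine le_sup_of_le_left (Submodule.span_mono ?_)
  rintro _ ⟨d, hd, -, rfl⟩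
  rw [(sum_apply_eq_zero_iff d).1 hd]
  rw [monomial_zero', C_1]
  rfl

theorem Pw_consWeight_le {k m : ℕ} {w : ℕ → ℕ} {s t : Set P4}
    (hs : ∀ S : Finset (Fin 4), S.card = k → prodX S ∈ s)
    (ht : Pw m w ≤ Submodule.span kk t ⊔ PwLt m w) :
    Pw (k + 2 * m) (consWeight k w) ≤
      Submodule.span kk (Set.image2 (fun A B => A * B ^ 2) s t) ⊔
        PwLt (k + 2 * m) (consWeight k w) := by
  refine Submodule.span_le.2 ?_
  rintro _ ⟨d, hd, hw | hw, rfl⟩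
  · obtain ⟨S, c, rfl⟩ := exists_eq_indicatorExp_add d
    rw [wv_indicatorExp_add] at hw
    obtain rfl : S.card = k := congrFun hw 0
    obtain rfl : wv c = w := funext fun j => congrFun hw (j + 1)
    obtain rfl : ∑ i, c i = m := by
      rw [sum_add_two_smul, sum_indicatorExp] at hd
      lia
    obtain ⟨g, hg, r, hr, hgr⟩ := Submodule.mem_sup.1 (ht (monomial_mem_Pw c))
    rw [monomial_add_two_smul, ← hgr, CharTwo.add_sq, mul_add, ← prodX_eq_monomial]
    refine Submodule.add_mem_sup ?_ (mul_sq_mem_PwLt (prodX_mem_homog S) hr)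
    refine mul_sq_mem_of_mem_span ?_ (Submodule.subset_span (hs S rfl)) hg
    exact fun a ha b hb => Submodule.subset_span (Set.mem_image2_of_mem ha hb)
  · exact Submodule.mem_sup_right (Submodule.subset_span ⟨d, hd, hw, rfl⟩)

theorem prodX_mem_range_X {S : Finset (Fin 4)} (hS : S.card = 1) :
    prodX S ∈ Set.range (X : Fin 4 → P4) := by
  obtain ⟨i, rfl⟩ := Finset.card_eq_one.1 hS
  exact ⟨i, (Finset.prod_singleton X i).symm⟩

theorem prodX_mem_range_omitX {S : Finset (Fin 4)} (hS : S.card = 3) :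
    prodX S ∈ Set.range omitX := by
  obtain ⟨i, hi⟩ := Finset.card_eq_one.1 (show Sᶜ.card = 1 by simp [Finset.card_compl, hS])
  exact ⟨i, by rw [omitX, ← hi, compl_compl]⟩

theorem IsFlag.exists_right {α : Type*} [DecidableEq α] [Nontrivial α] {U : Finset α}
    (hU : U.Nonempty) : ∃ W, IsFlag U W := by
  obtain ⟨i, rfl⟩ | ⟨i, hi, j, hj, hij⟩ := hU.exists_eq_singleton_or_nontrivial
  · obtain ⟨j, hji⟩ := _root_.exists_ne i
    exact ⟨{j}, isFlag_singleton (Finset.singleton_nonempty j) (by simpa using hji.symm)⟩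
  · refine ⟨{i, j}, hU, Finset.insert_nonempty _ _, ?_⟩
    rw [Finset.inter_eq_right.2 (by grind), Finset.card_pair hij]
    exact even_two

section

variable {α : Type*} {V : Finset α}

theorem sum_nonempty_ite_subset [DecidableEq α] {S : Finset α} (hS : S.Nonempty) (hVS : ¬V ⊆ S) :
    ∑ U ∈ V.powerset with U.Nonempty, (if S ⊆ U then 1 else 0 : kk) = 0 := by
  have hset : {U ∈ V.powerset.filter Finset.Nonempty | S ⊆ U} = Finset.Icc S V := by
    ext U
    simp only [Finset.mem_filter, Finset.mem_powerset, Finset.mem_Icc]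
    exact ⟨fun h => ⟨h.2, h.1.1⟩, fun h => ⟨⟨h.2, hS.mono h.1⟩, h.1⟩⟩
  rw [Finset.sum_boole, hset]
  by_cases hSV : S ⊆ V
  · have hcard := Finset.card_lt_card ⟨hSV, hVS⟩
    rw [Finset.card_Icc_finset hSV, ZMod.natCast_eq_zero_iff_even]
    exact even_two.pow_of_ne_zero (Nat.sub_ne_zero_of_lt hcard)
  · rw [Finset.Icc_eq_empty hSV, Finset.card_empty, Nat.cast_zero]

theorem sum_nonempty_const (hV : V.Nonempty) (c : kk) :
    ∑ U ∈ V.powerset with U.Nonempty, c = c := by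
  classical
  have h : V.powerset = insert ∅ (V.powerset.filter Finset.Nonempty) := by
    ext U
    simp only [Finset.mem_powerset, Finset.mem_insert, Finset.mem_filter]
    grind [Finset.nonempty_iff_ne_empty]
  have hcard : ((V.powerset.filter Finset.Nonempty).card : kk) = 1 := by
    have heven : (V.powerset.card : kk) = 0 := by
      rw [Finset.card_powerset, ZMod.natCast_eq_zero_iff_even]
      exact even_two.pow_of_ne_zero hV.card_ne_zero
    rw [h, Finset.card_insert_of_notMem (by simp), Nat.cast_succ] at heven
    rw [eq_neg_of_add_eq_zero_left heven, CharTwo.neg_eq]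
  rw [Finset.sum_const, nsmul_eq_mul, hcard, one_mul]

theorem eq_zero_of_forall_nonempty_eq [DecidableEq α] {X : Type*} [AddCommGroup X] [Module kk X]
    (hV : V.Nonempty) {ψ : Finset α → X →ₗ[kk] kk} {s : Set X}
    (hs : ∀ v ∈ s, ∃ S : Finset α, S.Nonempty ∧ ¬V ⊆ S ∧
      ∀ U ⊆ V, U.Nonempty → ψ U v = if S ⊆ U then 1 else 0)
    {x : X} (hx : x ∈ Submodule.span kk s) {c : kk}
    (hc : ∀ U ⊆ V, U.Nonempty → ψ U x = c) : c = 0 := by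
  have hsum {v : X} {g : Finset α → kk} (h : ∀ U ⊆ V, U.Nonempty → ψ U v = g U) :
      (∑ U ∈ V.powerset with U.Nonempty, ψ U) v = ∑ U ∈ V.powerset with U.Nonempty, g U := by
    rw [LinearMap.sum_apply]
    refine Finset.sum_congr rfl fun U hU => ?_
    rw [Finset.mem_filter, Finset.mem_powerset] at hU
    exact h U hU.1 hU.2
  rw [← sum_nonempty_const hV c, ← hsum hc]
  refine LinearMap.eqOn_span (g := 0) (fun v hv => ?_) hx
  obtain ⟨S, hS, hVS, h⟩ := hs v hv
  rw [hsum h, sum_nonempty_ite_subset hS hVS, LinearMap.zero_apply]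

end

theorem wv_indicatorExp (S : Finset (Fin 4)) : wv (indicatorExp S) = consWeight S.card 0 := by
  have h0 : wv 0 = 0 := by
    funext j
    simp [wv]
  rw [← h0, ← wv_indicatorExp_add, smul_zero, add_zero]

theorem card_compl_singleton (i : Fin 4) : ({i}ᶜ : Finset (Fin 4)).card = 3 := by
  rw [Finset.card_compl, Finset.card_singleton, Fintype.card_fin]

theorem mul_sq_congr {k m : ℕ} {w : ℕ → ℕ} {A B C : P4} (hA : A ∈ homog k)
    (h : B - C ∈ hitAddLow m w) :
    A * B ^ 2 - A * C ^ 2 ∈ hitAddLow (k + 2 * m) (consWeight k w) := by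
  rw [← mul_sub, CharTwo.sub_eq_add (B ^ 2), ← CharTwo.add_sq, ← CharTwo.sub_eq_add]
  exact mul_sq_mem_hitAddLow hA h

theorem mk_eq_mk_of_sub_mem {N : Submodule kk P4} {f g : P4} (h : f - g ∈ N) :
    N.mkQ f = N.mkQ g := (Submodule.Quotient.eq N).2 h

/-! ### The weight `(3, 3, 3)` -/

/-- The weight vector `(3, 3, 3, 0, 0, …)`. -/
def cubeWeight : ℕ → ℕ := consWeight 3 (consWeight 3 (consWeight 3 0))

/-- The monomials `e_i e_j^2 e_k^4` of weight `(3, 3, 3)`, where `e_i = omitX i`. -/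
def cubeWord (i j k : Fin 4) : P4 := omitX i * (omitX j * omitX k ^ 2) ^ 2

/-- The exponent vector `(7, 7, 7, 0)` of the spike of weight `(3, 3, 3)`. -/
def cubeSpike : Fin 4 →₀ ℕ :=
  indicatorExp {3}ᶜ + 2 • (indicatorExp {3}ᶜ + 2 • indicatorExp {3}ᶜ)

theorem isSpike_cubeSpike : IsSpike cubeSpike := by
  intro i
  obtain rfl | hi := eq_or_ne i 3
  · exact ⟨0, by simp [cubeSpike]⟩
  · exact ⟨3, by simp [cubeSpike, hi]⟩

theorem wv_cubeSpike : wv cubeSpike = cubeWeight := by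
  simp only [cubeSpike, cubeWeight, wv_indicatorExp_add, wv_indicatorExp, card_compl_singleton]

theorem coeff_substM_cubeWord (M : Matrix (Fin 4) (Fin 4) kk) (i j k : Fin 4) :
    coeff cubeSpike (substM M (cubeWord i j k)) =
      M.adjugate 3 i * (M.adjugate 3 j * M.adjugate 3 k) := by
  have hhom (i : Fin 4) : substM M (omitX i) ∈ homog ({3}ᶜ : Finset (Fin 4)).card := by
    rw [card_compl_singleton]
    exact substM_mem_homog M (omitX_mem_homog i)
  simp only [cubeSpike, cubeWord, map_mul, map_pow, coeff_mul_sq (hhom _), coeff_substM_omitX]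

theorem Pw_cubeWeight_le :
    Pw 21 cubeWeight ≤
      Submodule.span kk {f | ∃ i j k, f = cubeWord i j k} ⊔ PwLt 21 cubeWeight := by
  have h {m : ℕ} {w : ℕ → ℕ} {t : Set P4} (ht : Pw m w ≤ Submodule.span kk t ⊔ PwLt m w) :=
    Pw_consWeight_le (fun S => prodX_mem_range_omitX) ht
  refine (h (h (h Pw_zero_le))).trans (sup_le_sup_right (Submodule.span_mono ?_) _)
  rintro _ ⟨_, ⟨i, rfl⟩, _, ⟨_, ⟨j, rfl⟩, _, ⟨_, ⟨k, rfl⟩, _, rfl, rfl⟩, rfl⟩, rfl⟩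
  exact ⟨i, j, k, by simp [cubeWord]⟩

theorem cubeWord_swap_left (i j k : Fin 4) :
    cubeWord i j k - cubeWord j i k ∈ hitAddLow 21 cubeWeight :=
  omitX_mul_omitX_swap (omitX_mem_homog k) _ i j

theorem cubeWord_swap_right (i j k : Fin 4) :
    cubeWord i j k - cubeWord i k j ∈ hitAddLow 21 cubeWeight := by
  have h := omitX_mul_omitX_swap (isHomogeneous_one (Fin 4) kk) 0 j k
  simpa only [one_pow, mul_one, cubeWord, cubeWeight, Nat.reduceMul, Nat.reduceAdd] using
    mul_sq_congr (omitX_mem_homog i) h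

theorem cubeWord_swap_cube (i j : Fin 4) :
    cubeWord i i j - cubeWord j j i ∈ hitAddLow 21 cubeWeight := omitX_cube_mul_swap i j

theorem eq_of_triple_eq {α β : Type*} [DecidableEq α] {F : α → α → α → β}
    (hleft : ∀ i j k, F i j k = F j i k) (hright : ∀ i j k, F i j k = F i k j)
    (hcube : ∀ i j, F i i j = F j j i) {i j k i' j' k' : α}
    (h : ({i, j, k} : Finset α) = {i', j', k'}) : F i j k = F i' j' k' := by
  simp only [Finset.ext_iff, Finset.mem_insert, Finset.mem_singleton] at h
  have hi := (h i).1 (by simp)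
  have hj := (h j).1 (by simp)
  have hk := (h k).1 (by simp)
  have hi' := (h i').2 (by simp)
  have hj' := (h j').2 (by simp)
  have hk' := (h k').2 (by simp)
  clear h
  grind (splits := 20)

theorem exists_adjugate_eq {U : Finset (Fin 4)} (hU : U.Nonempty) :
    ∃ M ∈ glSet, ∀ i, M.adjugate 3 i = if i ∈ U then 1 else 0 := by
  obtain ⟨W, hUW⟩ := IsFlag.exists_right hU
  obtain ⟨M, hM, hadj, -⟩ := exists_flag_matrix hUW
  exact ⟨M, hM, hadj⟩

theorem exists_cubeFunctional {U : Finset (Fin 4)} (hU : U.Nonempty) :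
    ∃ φ : (P4 ⧸ hitAddLow 21 cubeWeight) →ₗ[kk] kk,
      (∀ i j k, φ (Submodule.mkQ _ (cubeWord i j k)) = if {i, j, k} ⊆ U then 1 else 0) ∧
      ∀ f, IsInvariantMod 21 cubeWeight f → φ (Submodule.mkQ _ f) = coeff cubeSpike f := by
  obtain ⟨M, hM, hadj⟩ := exists_adjugate_eq hU
  refine ⟨Submodule.liftQ _ (lcoeff kk cubeSpike ∘ₗ (substM M).toLinearMap) fun f hf =>
    isSpike_cubeSpike.coeff_eq_zero wv_cubeSpike (substM_mem_hitAddLow M hf), fun i j k => ?_,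
    fun f hf => hf.coeff_substM isSpike_cubeSpike wv_cubeSpike hM⟩
  refine (coeff_substM_cubeWord M i j k).trans ?_
  simp only [hadj, ← ite_and, mul_ite, mul_one, mul_zero, Finset.insert_subset_iff,
    Finset.singleton_subset_iff]
  grind

theorem exists_cubeVec : ∃ v : Finset (Fin 4) → P4 ⧸ hitAddLow 21 cubeWeight,
    ∀ i j k, Submodule.mkQ _ (cubeWord i j k) = v {i, j, k} := by
  let cls (p : Fin 4 × Fin 4 × Fin 4) : P4 ⧸ hitAddLow 21 cubeWeight :=
    Submodule.mkQ _ (cubeWord p.1 p.2.1 p.2.2)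
  let support (p : Fin 4 × Fin 4 × Fin 4) : Finset (Fin 4) := {p.1, p.2.1, p.2.2}
  have h : cls.FactorsThrough support := fun ⟨i, j, k⟩ ⟨i', j', k'⟩ h =>
    eq_of_triple_eq (F := fun i j k => cls (i, j, k))
      (fun i j k => mk_eq_mk_of_sub_mem (cubeWord_swap_left i j k))
      (fun i j k => mk_eq_mk_of_sub_mem (cubeWord_swap_right i j k))
      (fun i j => mk_eq_mk_of_sub_mem (cubeWord_swap_cube i j)) h
  exact ⟨Function.extend support cls 0, fun i j k => (h.extend_apply 0 (i, j, k)).symm⟩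

theorem QwInv_cubeWeight : QwInv 21 cubeWeight glSet = ⊥ := by
  refine QwInv_eq_bot Pw_cubeWeight_le fun f hf hinv => ?_
  choose! ψ hword hψ using fun U => exists_cubeFunctional (U := U)
  obtain ⟨v, hv⟩ := exists_cubeVec
  set s : Set (Finset (Fin 4)) := {S | ∃ i j k, S = {i, j, k}}
  have heval {U : Finset (Fin 4)} (hU : U.Nonempty) {S : Finset (Fin 4)} (hS : S ∈ s) :
      ψ U (v S) = if S ⊆ U then 1 else 0 := by
    obtain ⟨i, j, k, rfl⟩ := hS
    rw [← hv, hword U hU]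
  have hne {S : Finset (Fin 4)} (hS : S ∈ s) : S.Nonempty := by
    obtain ⟨i, j, k, rfl⟩ := hS
    exact Finset.insert_nonempty _ _
  have hspan : Submodule.mkQ _ f ∈ Submodule.span kk (v '' s) := by
    refine Submodule.span_mono ?_ (Submodule.apply_mem_span_image_of_mem_span _ hf)
    rintro _ ⟨_, ⟨i, j, k, rfl⟩, rfl⟩
    exact ⟨_, ⟨i, j, k, rfl⟩, (hv i j k).symm⟩
  have hzero : coeff cubeSpike f = 0 := by
    refine eq_zero_of_forall_nonempty_eq Finset.univ_nonempty (fun _ => ?_) hspan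
      fun U _ hU => hψ U hU f hinv
    rintro ⟨S, hS, rfl⟩
    refine ⟨S, hne hS, fun h => ?_, fun U _ hU => heval hU hS⟩
    obtain ⟨i, j, k, rfl⟩ := hS
    exact absurd (Finset.card_le_card h) (Finset.card_le_three.trans_lt (by decide)).not_ge
  refine (Submodule.Quotient.mk_eq_zero _).1 (eq_zero_of_triangular (fun S => S) (s := s) (v := v)
    (ψ := ψ) (fun S hS => ?_) (fun S hS T hT h hTS => ?_) hspan fun S hS => ?_)
  · rw [heval (hne hS) hS, if_pos subset_rfl]
  · rw [heval (hne hS) hT] at h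
    exact lt_of_le_of_ne (by_contra fun hn => h (if_neg hn)) hTS
  · exact (hψ S (hne hS) f hinv).trans hzero

/-! ### The weight `(3, 3, 1, 1)` -/

/-- The weight vector `(3, 3, 1, 1, 0, 0, …)`. -/
def flagWeight : ℕ → ℕ := consWeight 3 (consWeight 3 (consWeight 1 (consWeight 1 0)))

/-- The monomials `e_a e_i^2 x_k^4 x_l^8` of weight `(3, 3, 1, 1)`, where `e_i = omitX i`. -/
def flagWord (a i k l : Fin 4) : P4 := omitX a * (omitX i * (X k * X l ^ 2) ^ 2) ^ 2

/-- The exponent vector `(15, 3, 3, 0)` of a spike of weight `(3, 3, 1, 1)`. -/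
def flagSpike : Fin 4 →₀ ℕ := indicatorExp {3}ᶜ +
  2 • (indicatorExp {3}ᶜ + 2 • (indicatorExp {0} + 2 • indicatorExp {0}))

theorem isSpike_flagSpike : IsSpike flagSpike := by
  intro i
  obtain rfl | hi := eq_or_ne i 3
  · exact ⟨0, by simp [flagSpike]⟩
  obtain rfl | hi' := eq_or_ne i 0
  · exact ⟨4, by simp [flagSpike]⟩
  · exact ⟨2, by simp [flagSpike, hi, hi']⟩

theorem wv_flagSpike : wv flagSpike = flagWeight := by
  simp only [flagSpike, flagWeight, wv_indicatorExp_add, wv_indicatorExp, card_compl_singleton,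
    Finset.card_singleton]

theorem coeff_substM_flagWord (M : Matrix (Fin 4) (Fin 4) kk) (a i k l : Fin 4) :
    coeff flagSpike (substM M (flagWord a i k l)) =
      M.adjugate 3 a * (M.adjugate 3 i * (M k 0 * M l 0)) := by
  have homit (i : Fin 4) : substM M (omitX i) ∈ homog ({3}ᶜ : Finset (Fin 4)).card := by
    rw [card_compl_singleton]
    exact substM_mem_homog M (omitX_mem_homog i)
  have hX (k : Fin 4) : substM M (X k) ∈ homog ({0} : Finset (Fin 4)).card :=
    substM_mem_homog M (X_mem_homog k)
  simp only [flagSpike, flagWord, map_mul, map_pow, coeff_mul_sq (homit _), coeff_mul_sq (hX _),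
    coeff_substM_omitX, coeff_substM_X]

theorem Pw_flagWeight_le :
    Pw 21 flagWeight ≤
      Submodule.span kk {f | ∃ a i k l, f = flagWord a i k l} ⊔ PwLt 21 flagWeight := by
  have hX {m : ℕ} {w : ℕ → ℕ} {t : Set P4} (ht : Pw m w ≤ Submodule.span kk t ⊔ PwLt m w) :=
    Pw_consWeight_le (fun S => prodX_mem_range_X) ht
  have homit {m : ℕ} {w : ℕ → ℕ} {t : Set P4} (ht : Pw m w ≤ Submodule.span kk t ⊔ PwLt m w) :=
    Pw_consWeight_le (fun S => prodX_mem_range_omitX) ht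
  refine (homit (homit (hX (hX Pw_zero_le)))).trans
    (sup_le_sup_right (Submodule.span_mono ?_) _)
  rintro _ ⟨_, ⟨a, rfl⟩, _, ⟨_, ⟨i, rfl⟩, _, ⟨_, ⟨k, rfl⟩, _, ⟨_, ⟨l, rfl⟩, _, rfl, rfl⟩,
    rfl⟩, rfl⟩, rfl⟩
  exact ⟨a, i, k, l, by simp [flagWord]⟩

theorem flagWord_swap_omitX (a i k l : Fin 4) :
    flagWord a i k l - flagWord i a k l ∈ hitAddLow 21 flagWeight :=
  omitX_mul_omitX_swap (mul_sq_mem_homog (X_mem_homog k) (X_mem_homog l)) _ a i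

theorem flagWord_swap_X (a i k l : Fin 4) :
    flagWord a i k l - flagWord a i l k ∈ hitAddLow 21 flagWeight := by
  simpa only [flagWord, flagWeight, Nat.reduceMul, Nat.reduceAdd] using
    mul_sq_congr (omitX_mem_homog a) (mul_sq_congr (omitX_mem_homog i) (X_mul_X_sq_swap _ k l))

/-- The polynomial `∑ i, e_i x_i^6`, where `e_i = omitX i`; its class for the weight `(3, 1, 1)` is
invariant. -/
def diagPoly : P4 := ∑ i, omitX i * (X i * X i ^ 2) ^ 2

/-- The polynomials `e_a (∑ i, e_i x_i^6)^2`. Their classes for the weight `(3, 3, 1, 1)` span the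
subspace on which the coefficient functionals of spikes vanish. -/
def diagSum (a : Fin 4) : P4 := omitX a * diagPoly ^ 2

theorem diagSum_eq_sum (a : Fin 4) : diagSum a = ∑ i, flagWord a i i i := by
  simp only [diagSum, diagPoly, flagWord, CharTwo.sum_sq, Finset.mul_sum]

/-- The relations of the weight `(3, 3, 1, 1)`, together with the polynomials `diagSum a`. -/
def flagRelations : Submodule kk P4 :=
  hitAddLow 21 flagWeight ⊔ Submodule.span kk (Set.range diagSum)

theorem mem_flagRelations_of_mem_hitAddLow {f : P4} (hf : f ∈ hitAddLow 21 flagWeight) :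
    f ∈ flagRelations := Submodule.mem_sup_left hf

theorem exists_flagFunctional {U W : Finset (Fin 4)} (hUW : IsFlag U W) :
    ∃ φ : (P4 ⧸ flagRelations) →ₗ[kk] kk,
      (∀ a i k l, φ (Submodule.mkQ _ (flagWord a i k l)) =
        if {a, i} ⊆ U ∧ {k, l} ⊆ W then 1 else 0) ∧
      ∀ f, IsInvariantMod 21 flagWeight f → φ (Submodule.mkQ _ f) = coeff flagSpike f := by
  obtain ⟨M, hM, hadj, hcol⟩ := exists_flag_matrix hUW
  set φ : P4 →ₗ[kk] kk := lcoeff kk flagSpike ∘ₗ (substM M).toLinearMap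
  have hword (a i k l : Fin 4) :
      φ (flagWord a i k l) = if {a, i} ⊆ U ∧ {k, l} ⊆ W then 1 else 0 := by
    refine (coeff_substM_flagWord M a i k l).trans ?_
    simp only [hadj, hcol, ← ite_and, mul_ite, mul_one, mul_zero, Finset.insert_subset_iff,
      Finset.singleton_subset_iff]
    grind
  have hdiag (a : Fin 4) : φ (diagSum a) = 0 := by
    have hcard : ((U ∩ W).card : kk) = 0 := (ZMod.natCast_eq_zero_iff_even).2 hUW.even_card_inter
    simp only [diagSum_eq_sum, map_sum, hword, Finset.insert_subset_iff,
      Finset.singleton_subset_iff, and_self, and_assoc]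
    by_cases ha : a ∈ U
    · simpa [ha, ← Finset.mem_inter] using hcard
    · simp [ha]
  refine ⟨Submodule.liftQ _ φ (sup_le (fun f hf => ?_) (Submodule.span_le.2 ?_)), hword,
    fun f hf => hf.coeff_substM isSpike_flagSpike wv_flagSpike hM⟩
  · exact isSpike_flagSpike.coeff_eq_zero wv_flagSpike (substM_mem_hitAddLow M hf)
  · rintro _ ⟨a, rfl⟩
    exact hdiag a

theorem eq_of_pair_eq {α β : Type*} [DecidableEq α] {F : α → α → β}
    (hsymm : ∀ i j, F i j = F j i) {i j i' j' : α} (h : ({i, j} : Finset α) = {i', j'}) :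
    F i j = F i' j' := by
  rw [← Finset.coe_inj, Finset.coe_pair, Finset.coe_pair, Set.pair_eq_pair_iff] at h
  obtain ⟨rfl, rfl⟩ | ⟨rfl, rfl⟩ := h
  exacts [rfl, hsymm _ _]

theorem exists_flagVec : ∃ θ : Finset (Fin 4) → Finset (Fin 4) → P4 ⧸ flagRelations,
    ∀ a i k l, Submodule.mkQ _ (flagWord a i k l) = θ {a, i} {k, l} := by
  let cls (p : (Fin 4 × Fin 4) × Fin 4 × Fin 4) : P4 ⧸ flagRelations :=
    Submodule.mkQ _ (flagWord p.1.1 p.1.2 p.2.1 p.2.2)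
  let support (p : (Fin 4 × Fin 4) × Fin 4 × Fin 4) : Finset (Fin 4) × Finset (Fin 4) :=
    ({p.1.1, p.1.2}, {p.2.1, p.2.2})
  have h : cls.FactorsThrough support := by
    rintro ⟨⟨a, i⟩, k, l⟩ ⟨⟨a', i'⟩, k', l'⟩ h
    obtain ⟨hai, hkl⟩ := Prod.ext_iff.1 h
    exact (eq_of_pair_eq (F := fun a i => cls ((a, i), k, l)) (fun a i => mk_eq_mk_of_sub_mem
      (mem_flagRelations_of_mem_hitAddLow (flagWord_swap_omitX a i k l))) hai).trans
      (eq_of_pair_eq (F := fun k l => cls ((a', i'), k, l)) (fun k l => mk_eq_mk_of_sub_mem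
        (mem_flagRelations_of_mem_hitAddLow (flagWord_swap_X a' i' k l))) hkl)
  exact ⟨fun S T => Function.extend support cls 0 (S, T),
    fun a i k l => (h.extend_apply 0 ((a, i), k, l)).symm⟩

theorem sum_flagWord_mem_hitAddLow (a b : Fin 4) :
    ∑ i, flagWord a i i b ∈ hitAddLow 21 flagWeight := by
  have h := hitSub_le_hitAddLow _ (consWeight 3 (consWeight 1 (consWeight 1 0)))
    (sum_omitX_mul_sq_mem_hitSub (pow_mem_homog (X_mem_homog b) 2))
  simpa only [flagWord, flagWeight, CharTwo.sum_sq, Finset.mul_sum, Nat.reduceMul,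
    Nat.reduceAdd] using mul_sq_mem_hitAddLow (omitX_mem_homog a) h

theorem sum_flagWord_diag_mem_hitAddLow (b : Fin 4) :
    ∑ i, flagWord i i i b ∈ hitAddLow 21 flagWeight := by
  have hg : prodX Finset.univ * (X b ^ 2) ^ 2 ∈ homog 8 :=
    mul_sq_mem_homog (prodX_mem_homog Finset.univ) (pow_mem_homog (X_mem_homog b) 2)
  simpa only [flagWord, X_mul_prodX_univ_mul_sq] using
    hitSub_le_hitAddLow _ flagWeight (sum_omitX_mul_sq_mem_hitSub hg)

theorem flagSystem_of_forall {θ : Finset (Fin 4) → Finset (Fin 4) → P4 ⧸ flagRelations}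
    {φ : Finset (Fin 4) → Finset (Fin 4) → (P4 ⧸ flagRelations) →ₗ[kk] kk}
    (hθ : ∀ a i k l, Submodule.mkQ _ (flagWord a i k l) = θ {a, i} {k, l})
    (hφ : ∀ U W, IsFlag U W → ∀ a i k l, φ U W (Submodule.mkQ _ (flagWord a i k l)) =
      if {a, i} ⊆ U ∧ {k, l} ⊆ W then 1 else 0) : FlagSystem θ φ where
  eval_eq := by
    rintro U W hUW _ _ ⟨a, -, i, -, rfl⟩ ⟨k, -, l, -, rfl⟩
    rw [← hθ, hφ U W hUW]
  sum_both a b := by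
    simp only [← hθ, ← map_sum]
    exact (Submodule.Quotient.mk_eq_zero _).2
      (mem_flagRelations_of_mem_hitAddLow (sum_flagWord_mem_hitAddLow a b))
  sum_left a := by
    have h : ∑ i, θ {a, i} {i} = Submodule.mkQ _ (diagSum a) := by
      simp only [diagSum_eq_sum, map_sum, hθ, Finset.pair_eq_singleton]
    rw [h]
    exact (Submodule.Quotient.mk_eq_zero _).2
      (Submodule.mem_sup_right (Submodule.subset_span ⟨a, rfl⟩))
  sum_right b := by
    have h : ∑ i, θ {i} {i, b} = Submodule.mkQ _ (∑ i, flagWord i i i b) := by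
      simp only [map_sum, hθ, Finset.pair_eq_singleton]
    rw [h]
    exact (Submodule.Quotient.mk_eq_zero _).2
      (mem_flagRelations_of_mem_hitAddLow (sum_flagWord_diag_mem_hitAddLow b))

theorem IsInvariantMod.mem_flagRelations {f : P4} (hinv : IsInvariantMod 21 flagWeight f)
    (hf : f ∈ Submodule.span kk {f | ∃ a i k l, f = flagWord a i k l}) : f ∈ flagRelations := by
  choose! φ hword hφ using fun U W => exists_flagFunctional (U := U) (W := W)
  obtain ⟨θ, hθ⟩ := exists_flagVec
  have hsys := flagSystem_of_forall hθ hword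
  have hspan : Submodule.mkQ _ f ∈
      Submodule.span kk (Set.image2 θ (pairSets Finset.univ) (pairSets Finset.univ)) := by
    refine Submodule.span_mono ?_ (Submodule.apply_mem_span_image_of_mem_span _ hf)
    rintro _ ⟨_, ⟨a, i, k, l, rfl⟩, rfl⟩
    rw [hθ]
    exact Set.mem_image2_of_mem (pair_mem_pairSets (Finset.mem_univ a) (Finset.mem_univ i))
      (pair_mem_pairSets (Finset.mem_univ k) (Finset.mem_univ l))
  have hflag {U : Finset (Fin 4)} (hU : U ⊆ {0}ᶜ) (hne : U.Nonempty) : IsFlag U {0} :=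
    (isFlag_singleton hne fun h => by simpa using hU h).symm
  have hzero : coeff flagSpike f = 0 := by
    refine eq_zero_of_forall_nonempty_eq (V := {0}ᶜ) (ψ := fun U => φ U {0}) ⟨1, by simp⟩ ?_ hspan
      fun U hU hne => hφ U {0} (hflag hU hne) f hinv
    rintro _ ⟨S, hS, T, hT, rfl⟩
    by_cases hT0 : T ⊆ {0}
    · refine ⟨S, nonempty_of_mem_pairSets hS, fun h => ?_, fun U hU hne => ?_⟩
      · obtain ⟨a, -, i, -, rfl⟩ := hS
        have hcard := (Finset.card_le_card h).trans Finset.card_le_two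
        rw [card_compl_singleton] at hcard
        lia
      · rw [hsys.eval_eq (hflag hU hne) hS hT]
        simp only [hT0, and_true]
    · refine ⟨{0}, Finset.singleton_nonempty 0, by decide, fun U hU hne => ?_⟩
      rw [hsys.eval_eq (hflag hU hne) hS hT, if_neg fun h => hT0 h.2, if_neg fun h => ?_]
      simpa using hU (Finset.singleton_subset_iff.1 h)
  exact (Submodule.Quotient.mk_eq_zero _).1
    (hsys.eq_zero_of_mem_span hspan fun {U W} hUW => (hφ U W hUW f hinv).trans hzero)

/-! ### Transvections -/

/-- The action of the transvection `x_p ↦ x_p + x_q`. -/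
def transvect (p q : Fin 4) : P4 →ₐ[kk] P4 := substM (Matrix.transvection p q 1)

theorem transvect_X (p q i : Fin 4) :
    transvect p q (X i) = X i + if i = p then X q else 0 := by
  simp [transvect, substM, Matrix.transvection, Matrix.one_apply, Matrix.single_apply, add_smul,
    Finset.sum_add_distrib, ite_smul, ite_and, eq_comm]

theorem transvection_mem_glSet {p q : Fin 4} (hpq : p ≠ q) :
    Matrix.transvection p q 1 ∈ glSet :=
  (Matrix.isUnit_iff_isUnit_det _).2 (by simp [Matrix.det_transvection_of_ne p q hpq])

theorem transvect_prodX {p q : Fin 4} {S : Finset (Fin 4)} (hp : p ∉ S) :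
    transvect p q (prodX S) = prodX S := by
  rw [prodX, map_prod]
  refine Finset.prod_congr rfl fun i hi => ?_
  rw [transvect_X, if_neg (ne_of_mem_of_not_mem hi hp), add_zero]

theorem transvect_omitX_self (p q : Fin 4) : transvect p q (omitX p) = omitX p :=
  transvect_prodX (by simp)

theorem transvect_omitX_of_ne {p q i : Fin 4} (hi : i ≠ p) :
    transvect p q (omitX i) = omitX i + X q * prodX {p, i}ᶜ := by
  rw [← X_mul_prodX_compl_pair hi.symm, map_mul, transvect_X, if_pos rfl,
    transvect_prodX (by simp), add_mul]

theorem transvect_omitX_mul_sq_sub_mem {p q : Fin 4} (hpq : p ≠ q) {m : ℕ} {g : P4}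
    (hg : g ∈ homog m) (w : ℕ → ℕ) (i : Fin 4) :
    transvect p q (omitX i) * g ^ 2 - (omitX i + if i = q then omitX p else 0) * g ^ 2 ∈
      hitAddLow (3 + 2 * m) (consWeight 3 w) := by
  obtain rfl | hip := eq_or_ne i p
  · rw [transvect_omitX_self, if_neg hpq, add_zero, sub_self]
    exact Submodule.zero_mem _
  rw [transvect_omitX_of_ne hip]
  obtain rfl | hiq := eq_or_ne i q
  · rw [if_pos rfl, Finset.pair_comm, X_mul_prodX_compl_pair hip, sub_self]
    exact Submodule.zero_mem _
  · have hcard := card_compl_pair hip.symm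
    have h := X_mul_prodX_mul_sq_mem_PwLt (S := {p, i}ᶜ) (i := q)
      (by simp [hpq.symm, hiq.symm]) (by lia) hg w
    rw [hcard] at h
    rw [if_neg hiq, add_zero, ← sub_mul, add_sub_cancel_left, mul_assoc]
    exact PwLt_le_hitAddLow _ _ h

theorem transvect_X_mul_X_sq (p q i : Fin 4) :
    transvect p q (X i * X i ^ 2) = X i * X i ^ 2 +
      if i = p then X q * X q ^ 2 + (X p * X q ^ 2 - X q * X p ^ 2) else 0 := by
  rw [map_mul, map_pow, transvect_X]
  split_ifs with hi
  · subst hi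
    rw [CharTwo.add_sq, CharTwo.sub_eq_add]
    ring
  · simp only [add_zero]

theorem diagPoly_mem_homog : diagPoly ∈ homog 9 :=
  Submodule.sum_mem _ fun i _ =>
    mul_sq_mem_homog (omitX_mem_homog i) (mul_sq_mem_homog (X_mem_homog i) (X_mem_homog i))

theorem transvect_diagPoly_sub_mem {p q : Fin 4} (hpq : p ≠ q) :
    transvect p q diagPoly - diagPoly ∈
      hitAddLow 9 (consWeight 3 (consWeight 1 (consWeight 1 0))) := by
  set g : Fin 4 → P4 := fun i => transvect p q (X i * X i ^ 2) with hg
  have hghom (i : Fin 4) : g i ∈ homog 3 :=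
    substM_mem_homog _ (mul_sq_mem_homog (X_mem_homog i) (X_mem_homog i))
  have hlow := Submodule.sum_mem (t := Finset.univ) _ fun i _ =>
    transvect_omitX_mul_sq_sub_mem hpq (hghom i) (consWeight 1 (consWeight 1 0)) i
  have hswap : omitX p * (X p * X q ^ 2 - X q * X p ^ 2) ^ 2 ∈
      hitAddLow 9 (consWeight 3 (consWeight 1 (consWeight 1 0))) := by
    simpa only [Nat.reduceMul, Nat.reduceAdd] using
      mul_sq_mem_hitAddLow (omitX_mem_homog p) (X_mul_X_sq_swap (consWeight 1 (consWeight 1 0)) p q)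
  have hsum : ∑ i, (omitX i + if i = q then omitX p else 0) * g i ^ 2 =
      diagPoly + omitX p * (X p * X q ^ 2 - X q * X p ^ 2) ^ 2 := by
    have hsq (i : Fin 4) : g i ^ 2 = (X i * X i ^ 2) ^ 2 +
        if i = p then (X q * X q ^ 2) ^ 2 + (X p * X q ^ 2 - X q * X p ^ 2) ^ 2 else 0 := by
      simp only [hg, transvect_X_mul_X_sq]
      split_ifs <;> simp only [CharTwo.add_sq, add_zero]
    simp only [hsq, diagPoly, add_mul, mul_add, mul_ite, ite_mul, zero_mul, mul_zero,
      Finset.sum_add_distrib, Finset.sum_ite_eq', Finset.mem_univ, if_true, if_neg hpq]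
    linear_combination omitX p * (X q * X q ^ 2) ^ 2 * (CharTwo.two_eq_zero : (2 : P4) = 0)
  have hdiag : transvect p q diagPoly = ∑ i, transvect p q (omitX i) * g i ^ 2 := by
    simp only [diagPoly, map_sum, map_mul, map_pow, hg]
  rw [Finset.sum_sub_distrib, hsum, ← hdiag, ← sub_sub] at hlow
  exact (Submodule.sub_mem_iff_left _ hswap).1 hlow

theorem transvect_diagSum_sub_mem {p q : Fin 4} (hpq : p ≠ q) (a : Fin 4) :
    transvect p q (diagSum a) - diagSum a - (if a = q then diagSum p else 0) ∈
      hitAddLow 21 flagWeight := by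
  have hlift (i : Fin 4) : omitX i * transvect p q diagPoly ^ 2 - diagSum i ∈
      hitAddLow 21 flagWeight := by
    simpa only [diagSum, flagWeight, Nat.reduceMul, Nat.reduceAdd] using
      mul_sq_congr (omitX_mem_homog i) (transvect_diagPoly_sub_mem hpq)
  have h : transvect p q (diagSum a) -
      (omitX a + if a = q then omitX p else 0) * transvect p q diagPoly ^ 2 ∈
      hitAddLow 21 flagWeight := by
    have hT : transvect p q diagPoly ∈ homog 9 := substM_mem_homog _ diagPoly_mem_homog
    simpa only [diagSum, map_mul, map_pow, flagWeight, Nat.reduceMul, Nat.reduceAdd] using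
      transvect_omitX_mul_sq_sub_mem hpq hT _ a
  have h' := Submodule.add_mem _ h (hlift a)
  split_ifs at h' ⊢
  · convert Submodule.add_mem _ h' (hlift p) using 1
    ring
  · convert h' using 1
    ring

/-! ### Invariants of the weight `(3, 3, 1, 1)` -/

theorem smul_diagSum_mem_of_isInvariantMod {c : Fin 4 → kk}
    (hc : IsInvariantMod 21 flagWeight (∑ a, c a • diagSum a)) (b : Fin 4) :
    c b • diagSum b ∈ hitAddLow 21 flagWeight := by
  have hne {p q : Fin 4} (hpq : p ≠ q) : c q • diagSum p ∈ hitAddLow 21 flagWeight := by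
    have hinv : transvect p q (∑ a, c a • diagSum a) - ∑ a, c a • diagSum a ∈
        hitAddLow 21 flagWeight := hc _ (transvection_mem_glSet hpq)
    have hsum := Submodule.sum_mem (t := Finset.univ) _ fun a _ =>
      Submodule.smul_mem _ (c a) (transvect_diagSum_sub_mem hpq a)
    simp only [smul_sub, Finset.sum_sub_distrib, smul_ite, smul_zero, Finset.sum_ite_eq',
      Finset.mem_univ, if_true] at hsum
    simp only [map_sum, map_smul] at hinv
    exact (Submodule.sub_mem_iff_right _ hinv).1 hsum
  obtain ⟨p, hp⟩ := exists_ne b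
  have h := isInvariantMod_of_mem_hitAddLow (hne hp) _ (transvection_mem_glSet hp.symm)
  have h' := Submodule.smul_mem _ (c b) (transvect_diagSum_sub_mem hp.symm p)
  rw [if_pos rfl, smul_sub, smul_sub, ← map_smul] at h'
  exact (Submodule.sub_mem_iff_right _ h).1 h'

theorem QwInv_flagWeight : QwInv 21 flagWeight glSet = ⊥ := by
  refine QwInv_eq_bot Pw_flagWeight_le fun f hf hinv => ?_
  obtain ⟨d, hd, x, hx, rfl⟩ := Submodule.mem_sup.1 (hinv.mem_flagRelations hf)
  obtain ⟨c, rfl⟩ := (Submodule.mem_span_range_iff_exists_fun kk).1 hx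
  have hc : IsInvariantMod 21 flagWeight (∑ a, c a • diagSum a) := by
    simpa only [add_sub_cancel_left] using hinv.sub (isInvariantMod_of_mem_hitAddLow hd)
  exact Submodule.add_mem _ hd
    (Submodule.sum_mem _ fun a _ => smul_diagSum_mem_of_isInvariantMod hc a)

theorem flagWeight_eq : flagWeight = fun j => if j < 2 then 3 else if j < 4 then 1 else 0 := by
  funext j
  rcases j with _ | _ | _ | _ | j <;> simp [flagWeight, consWeight]

theorem cubeWeight_eq : cubeWeight = fun j => if j < 3 then 3 else 0 := by
  funext j
  rcases j with _ | _ | _ | j <;> simp [cubeWeight, consWeight]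

/-- For `n = 21` and the weight vectors `ω₁ = (3,3,1,1)` and `ω₂ = (3,3,3)` of degree `21`,
the `GL_4(F_2)`-invariants of the weight subquotients `(Q_21)^{ω₁}` and `(Q_21)^{ω₂}` are
both trivial. -/
theorem statement_12 :
    QwInv 21 (fun j => if j < 2 then 3 else if j < 4 then 1 else 0) glSet = ⊥ ∧
    QwInv 21 (fun j => if j < 3 then 3 else 0) glSet = ⊥ := by
  rw [← flagWeight_eq, ← cubeWeight_eq]
  exact ⟨QwInv_flagWeight, QwInv_cubeWeight⟩

end
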